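/- arXiv:1908.07361 — 3 statements merged into one kernel-verified Lean document; each statement's English description precedes it below -/
import Mathlib

section
/- Let d be a rational prime and let m ≥ 2, n ≥ 1 be integers. Then the number of irreducible factors of the Misiurewicz polynomial G_{d,m,n}(c) over ℚ is bounded above by the number of irreducible factors of the reduction G̅_{d,0,n}(c) ∈ 𝔽_d[c] over 𝔽_d. -/
open Polynomial

noncomputable section

/-- `critPoly d i` is `f_{c,d}^i(0)` as a polynomial in the variable `c` over `ℤ`,
where `f_{c,d}(x) = x^d + c`. -/
def critPoly (d : ℕ) : ℕ → Polynomial ℤ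
  | 0 => 0
  | i + 1 => critPoly d i ^ d + X

/-- The field of rational functions in `c` over `ℚ`, realized as the fraction field of `ℤ[c]`. -/
abbrev RF : Type := FractionRing (Polynomial ℤ)

/-- The natural inclusion `ℤ[c] → ℚ(c)`. -/
def toRF (p : Polynomial ℤ) : RF := algebraMap (Polynomial ℤ) RF p

/-- `G_{d,0,n} = ∏_{k ∣ n} (f_{c,d}^k(0))^{μ(n/k)}` as a rational function. -/
def G0Rat (d n : ℕ) : RF :=
  ∏ k ∈ n.divisors, toRF (critPoly d k) ^ (ArithmeticFunction.moebius (n / k))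

/-- `F_{d,m,n}` as a rational function. -/
def FRat (d m n : ℕ) : RF :=
  ∏ k ∈ n.divisors,
    ((toRF (critPoly d (m + k)) - toRF (critPoly d m)) /
      (toRF (critPoly d (m - 1 + k)) - toRF (critPoly d (m - 1)))) ^
      (ArithmeticFunction.moebius (n / k))

/-- `G_{d,m,n}` (for `m ≥ 2`) as a rational function. -/
def GRat (d m n : ℕ) : RF :=
  if n ∣ m - 1 then FRat d m n / FRat d 1 n else FRat d m n

/-- `G : ℤ[c]` is the Misiurewicz polynomial `G_{d,m,n}` (for `m ≥ 2`). -/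
def IsMisiurewicz (d m n : ℕ) (G : Polynomial ℤ) : Prop := toRF G = GRat d m n

/-- `G0 : ℤ[c]` is the polynomial `G_{d,0,n}`. -/
def IsG0 (d n : ℕ) (G0 : Polynomial ℤ) : Prop := toRF G0 = G0Rat d n

/-!
Write `aₖ` for `f^k(0)` and `r = m - 1`. The geometric sum
`Qₖ = (a_{r+k}^d - a_r^d) / (a_{r+k} - a_r)` is the base occurring in `F_{d,m,n}`, and dividing out
`F_{d,1,n}` when `n ∣ r` just removes the common factor `aₖ` of `a_{r+k}` and `a_r`. Hence
`G_{d,m,n} = ∏ Pₖ ^ μ(n/k)` with `Pₖ` a monic geometric sum, and modulo `d` every `Pₖ` is the same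
power of `aₖ`, so that `G_{d,m,n}` reduces to a power of the reduction of `G_{d,0,n}`.

Let `q` be an irreducible factor of `G_{d,0,n}` modulo `d` and let `M = (d, q)`, a maximal ideal of
`ℤ[c]`. Modulo `d` each `aₖ` has derivative `1`, hence is squarefree, and Möbius inversion shows
that `0` has exact period `n` modulo `q`. So `Pₖ ∉ M` for the proper divisors `k` of `n`, whereas
`Pₙ = ∑ vⁱ u^{d-1-i}` with `v - u ∈ M²` and `u ∉ M`, so `Pₙ ≡ d u^{d-1} ≢ 0` modulo `M²`. Thus
`G_{d,m,n} ∉ M²`: two irreducible factors of `G_{d,m,n}` never share an irreducible factor modulo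
`d`. (For `G_{2,2,1} = c + 2`, where `v - u ∉ M²`, that `G ∉ M²` is seen by differentiating.)
-/

/-! ### Geometric sums -/

section GeomSum

variable {R : Type*} [CommRing R]

lemma geom_sum₂_mul_left (c x y : R) (n : ℕ) :
    ∑ i ∈ Finset.range n, (c * x) ^ i * (c * y) ^ (n - 1 - i) =
      c ^ (n - 1) * ∑ i ∈ Finset.range n, x ^ i * y ^ (n - 1 - i) := by
  rw [Finset.mul_sum]
  refine Finset.sum_congr rfl fun i hi => ?_
  have hc : c ^ (n - 1) = c ^ i * c ^ (n - 1 - i) := by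
    rw [← pow_add, Nat.add_sub_cancel' (Nat.le_sub_one_of_lt (Finset.mem_range.1 hi))]
  rw [hc]
  ring

lemma geom_sum₂_eq_sub_pow [IsDomain R] (p : ℕ) [Fact p.Prime] [CharP R p] (x y : R) :
    ∑ i ∈ Finset.range p, x ^ i * y ^ (p - 1 - i) = (x - y) ^ (p - 1) := by
  have hp : p.Prime := Fact.out
  rcases eq_or_ne x y with rfl | hxy
  · simp [geom_sum₂_self, CharP.cast_eq_zero, Nat.sub_ne_zero_of_lt hp.one_lt]
  · apply mul_right_cancel₀ (sub_ne_zero.2 hxy)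
    rw [geom_sum₂_mul, ← sub_pow_char, ← pow_succ, Nat.sub_add_cancel hp.one_le]

lemma geom_sum₂_sub_mem {I : Ideal R} {x y : R} (h : x - y ∈ I) (n : ℕ) :
    ∑ i ∈ Finset.range n, x ^ i * y ^ (n - 1 - i) - n * y ^ (n - 1) ∈ I := by
  rw [← Ideal.Quotient.eq] at h ⊢
  simp only [map_sum, map_mul, map_pow, h, map_natCast]
  exact geom_sum₂_self _ _

end GeomSum

/-! ### Squares of maximal ideals -/

section MaximalIdeal

variable {R : Type*} [CommRing R]

lemma mem_pow_of_mul_mem_pow {M : Ideal R} [hM : M.IsMaximal] {n : ℕ} {x y : R}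
    (h : x * y ∈ M ^ n) (hy : y ∉ M) : x ∈ M ^ n := by
  rcases eq_or_ne n 0 with rfl | hn
  · simp
  have hrad : (M ^ n).radical = M := by rw [Ideal.radical_pow M hn, hM.isPrime.radical]
  have hprimary : (M ^ n).IsPrimary := Ideal.isPrimary_of_isMaximal_radical (hrad.symm ▸ hM)
  exact ((Ideal.isPrimary_iff.1 hprimary).2 h).resolve_right (hrad.symm ▸ hy)

lemma geom_sum₂_notMem_sq {M : Ideal R} [hM : M.IsMaximal] {x y : R} (hxy : x - y ∈ M ^ 2)
    (hy : y ∉ M) {n : ℕ} (hn : (n : R) ∉ M ^ 2) :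
    ∑ i ∈ Finset.range n, x ^ i * y ^ (n - 1 - i) ∉ M ^ 2 := by
  intro hsum
  have hmul : (n : R) * y ^ (n - 1) ∈ M ^ 2 :=
    (Submodule.sub_mem_iff_right _ hsum).1 (geom_sum₂_sub_mem hxy n)
  exact hn (mem_pow_of_mul_mem_pow hmul fun h => hy (hM.isPrime.mem_of_pow_mem _ h))

lemma prime_notMem_span_pair_sq [IsDomain R] {p g : R} (hp : Prime p) (hg : ¬ p ∣ g)
    (htop : Ideal.span {p, g} ≠ ⊤) : p ∉ Ideal.span {p, g} ^ 2 := by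
  intro h
  rw [pow_two, Ideal.span_pair_mul_span_pair] at h
  simp only [Ideal.mem_span_insert, Ideal.mem_span_singleton'] at h
  obtain ⟨a, _, ⟨b, _, ⟨b', _, ⟨c, rfl⟩, rfl⟩, rfl⟩, h⟩ := h
  have hdvd : p ∣ c * (g * g) := ⟨1 - a * p - (b + b') * g, by linear_combination -h⟩
  obtain ⟨c', rfl⟩ := (hp.dvd_or_dvd hdvd).resolve_right fun h => (hp.dvd_or_dvd h).elim hg hg
  have hone : (a * p + b' * g + b * g) + c' * g * g = 1 :=
    mul_left_cancel₀ hp.ne_zero (by linear_combination -h)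
  refine htop ((Ideal.eq_top_iff_one _).2 (Ideal.mem_span_pair.2 ⟨a, b + b' + c' * g, ?_⟩))
  linear_combination hone

lemma derivation_mem_of_mem_sq {A : Type*} [CommRing A] [Algebra A R] (D : Derivation A R R)
    {I : Ideal R} {x : R} (hx : x ∈ I ^ 2) : D x ∈ I := by
  rw [pow_two] at hx
  refine Submodule.mul_induction_on hx (fun y hy z hz => ?_) (fun y z hy hz => ?_)
  · rw [D.leibniz]
    exact I.add_mem (I.mul_mem_right _ hy) (I.mul_mem_right _ hz)
  · rw [map_add]
    exact I.add_mem hy hz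

end MaximalIdeal

section IdealOver

variable {R S : Type*} [CommRing R] [CommRing S]

/-- The ideal of all elements whose image under `φ` is divisible by `q`; for the reduction
`ℤ[c] → 𝔽_d[c]` and `q` irreducible it is the maximal ideal `M = (d, q)`. -/
def idealOver (φ : R →+* S) (q : S) : Ideal R := (Ideal.span {q}).comap φ

variable {φ : R →+* S}

lemma mem_idealOver {q : S} {x : R} : x ∈ idealOver φ q ↔ q ∣ φ x := by
  rw [idealOver, Ideal.mem_comap, Ideal.mem_span_singleton]

lemma idealOver_ne_top {q : S} (hq : ¬ IsUnit q) : idealOver φ q ≠ ⊤ := by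
  rw [idealOver, Ne, Ideal.comap_eq_top_iff, Ideal.span_singleton_eq_top]
  exact hq

lemma isMaximal_idealOver [IsPrincipalIdealRing S] (hφ : Function.Surjective φ)
    {q : S} (hq : Irreducible q) : (idealOver φ q).IsMaximal :=
  have := PrincipalIdealRing.isMaximal_of_irreducible hq
  Ideal.comap_isMaximal_of_surjective φ hφ

lemma idealOver_map (hφ : Function.Surjective φ) {p : R} (hker : RingHom.ker φ = Ideal.span {p})
    (g : R) : idealOver φ (φ g) = Ideal.span {p, g} := by
  rw [idealOver, ← Set.image_singleton, ← Ideal.map_span, Ideal.comap_map_of_surjective' φ hφ, hker,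
    Ideal.span_insert, sup_comm]

lemma prime_notMem_idealOver_sq [IsDomain R] (hφ : Function.Surjective φ) {p : R} (hp : Prime p)
    (hker : RingHom.ker φ = Ideal.span {p}) {q : S} (hq₀ : q ≠ 0) (hq : ¬ IsUnit q) :
    p ∉ idealOver φ q ^ 2 := by
  obtain ⟨g, rfl⟩ := hφ q
  have htop : Ideal.span {p, g} ≠ ⊤ := idealOver_map hφ hker g ▸ idealOver_ne_top hq
  rw [idealOver_map hφ hker]
  refine prime_notMem_span_pair_sq hp (fun hpg => hq₀ ?_) htop
  rwa [← Ideal.mem_span_singleton, ← hker] at hpg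

end IdealOver

/-! ### Products of integral powers in a fraction field -/

lemma prod_zpow_mul_prod_pow_toNat_neg {G ι : Type*} [CommGroupWithZero G] {s : Finset ι}
    {x : ι → G} (z : ι → ℤ) (hx : ∀ i ∈ s, x i ≠ 0) :
    (∏ i ∈ s, x i ^ z i) * ∏ i ∈ s, x i ^ (-z i).toNat = ∏ i ∈ s, x i ^ (z i).toNat := by
  rw [← Finset.prod_mul_distrib]
  refine Finset.prod_congr rfl fun i hi => ?_
  rw [← zpow_natCast, ← zpow_natCast, ← zpow_add₀ (hx i hi)]
  congr 1
  omega

section FractionRing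

variable {A K ι : Type*} [CommRing A] [Field K] [Algebra A K] [IsFractionRing A K]
  {s : Finset ι} {x : ι → A} {z : ι → ℤ} {a : A}

lemma mul_prod_pow_toNat_neg_of_algebraMap_eq (hx : ∀ i ∈ s, x i ≠ 0)
    (ha : algebraMap A K a = ∏ i ∈ s, algebraMap A K (x i) ^ z i) :
    a * ∏ i ∈ s, x i ^ (-z i).toNat = ∏ i ∈ s, x i ^ (z i).toNat := by
  apply IsFractionRing.injective A K
  simp only [map_mul, map_prod, map_pow, ha]
  refine prod_zpow_mul_prod_pow_toNat_neg z fun i hi => ?_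
  exact (map_ne_zero_iff _ (IsFractionRing.injective A K)).2 (hx i hi)

lemma algebraMap_map_eq_prod_zpow {B L : Type*} [CommRing B] [Field L] [Algebra B L]
    [IsFractionRing B L] (φ : A →+* B) (hx : ∀ i ∈ s, φ (x i) ≠ 0)
    (ha : algebraMap A K a = ∏ i ∈ s, algebraMap A K (x i) ^ z i) :
    algebraMap B L (φ a) = ∏ i ∈ s, algebraMap B L (φ (x i)) ^ z i := by
  have hxL : ∀ i ∈ s, algebraMap B L (φ (x i)) ≠ 0 := fun i hi =>
    (map_ne_zero_iff _ (IsFractionRing.injective B L)).2 (hx i hi)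
  have hx0 : ∀ i ∈ s, x i ≠ 0 := fun i hi h => hx i hi (by rw [h, map_zero])
  have hclear := congrArg (fun b => algebraMap B L (φ b))
    (mul_prod_pow_toNat_neg_of_algebraMap_eq hx0 ha)
  simp only [map_mul, map_prod, map_pow] at hclear
  refine mul_right_cancel₀ (Finset.prod_ne_zero_iff.2 fun i hi => pow_ne_zero _ (hxL i hi))
    (hclear.trans (prod_zpow_mul_prod_pow_toNat_neg z hxL).symm)

lemma notMem_pow_of_algebraMap_eq_prod_zpow {M : Ideal A} [hM : M.IsMaximal] {n : ℕ}
    (ha : algebraMap A K a = ∏ i ∈ s, algebraMap A K (x i) ^ z i) (hx : ∀ i ∈ s, x i ≠ 0)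
    {j : ι} (hj : j ∈ s) (hzj : z j = 1) (hxj : x j ∉ M ^ n) (hxM : ∀ i ∈ s, i ≠ j → x i ∉ M) :
    a ∉ M ^ n := by
  classical
  intro hmem
  have hprod : x j * ∏ i ∈ s.erase j, x i ^ (z i).toNat ∈ M ^ n := by
    have hclear := mul_prod_pow_toNat_neg_of_algebraMap_eq hx ha
    rw [← Finset.mul_prod_erase s (fun i => x i ^ (z i).toNat) hj, hzj, Int.toNat_one,
      pow_one] at hclear
    exact hclear ▸ Ideal.mul_mem_right _ _ hmem
  refine hxj (mem_pow_of_mul_mem_pow hprod fun h => ?_)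
  obtain ⟨i, hi, hiM⟩ := hM.isPrime.prod_mem_iff.1 h
  exact hxM i (Finset.mem_of_mem_erase hi) (Finset.ne_of_mem_erase hi)
    (hM.isPrime.mem_of_pow_mem _ hiM)

end FractionRing

lemma monic_of_algebraMap_eq_prod_zpow {R K ι : Type*} [CommRing R] [Nontrivial R] [Field K]
    [Algebra R[X] K] [IsFractionRing R[X] K] {s : Finset ι} {x : ι → R[X]} {z : ι → ℤ} {a : R[X]}
    (hx : ∀ i ∈ s, (x i).Monic)
    (ha : algebraMap R[X] K a = ∏ i ∈ s, algebraMap R[X] K (x i) ^ z i) : a.Monic := by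
  refine Monic.of_mul_monic_right
    (monic_prod_of_monic s (fun i => x i ^ (-z i).toNat) fun i hi => (hx i hi).pow _) ?_
  rw [mul_prod_pow_toNat_neg_of_algebraMap_eq (fun i hi => (hx i hi).ne_zero) ha]
  exact monic_prod_of_monic _ _ fun i hi => (hx i hi).pow _

lemma prod_divisors_ite_zpow_moebius {G : Type*} [CommGroupWithZero G] {y : G} (hy : y ≠ 0)
    (N : ℕ) {n : ℕ} (hn : n ≠ 0) :
    ∏ k ∈ n.divisors, (if N ∣ k then y else 1) ^ ArithmeticFunction.moebius (n / k) =
      if n = N then y else 1 := by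
  have hinv := (ArithmeticFunction.prod_eq_iff_prod_pow_moebius_eq_of_nonzero
    (f := fun k => if k = N then y else 1) (g := fun k => if N ∣ k then y else 1)
    (fun k _ => by split_ifs <;> simp [hy]) (fun k _ => by split_ifs <;> simp [hy])).1
    (fun k hk => by simp [hk.ne']) n hn.bot_lt
  rw [← hinv, ← Nat.prod_divisorsAntidiagonal'
    (f := fun a b => (if N ∣ b then y else 1) ^ ArithmeticFunction.moebius a)]

/-! ### Counting irreducible factors through a reduction -/

section Counting

open UniqueFactorizationMonoid

lemma card_factors_le_card_factors_of_notMem_sq {R S : Type*} [CommRing R]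
    [UniqueFactorizationMonoid R] [CommRing S] [UniqueFactorizationMonoid S]
    (φ : R →+* S) {x : R} (hx : x ≠ 0) {y : S}
    (hdvd : ∀ p ∈ factors x, ∃ q ∈ factors y, q ∣ φ p)
    (hsq : ∀ q ∈ factors y, x ∉ idealOver φ q ^ 2) :
    Multiset.card (factors x) ≤ Multiset.card (factors y) := by
  classical
  choose! g hgy hgφ using hdvd
  have hnodup : ((factors x).map g).Nodup := by
    rw [Multiset.nodup_iff_ne_cons_cons]
    intro q t ht
    obtain ⟨p, hp, hpq, ht⟩ := (Multiset.map_eq_cons _ _ _ _).2 ht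
    obtain ⟨p', hp', hpq', -⟩ := (Multiset.map_eq_cons _ _ _ _).2 ht
    have hmul : p * p' ∣ x := by
      refine Dvd.dvd.trans ?_ (factors_prod hx).dvd
      rw [← Multiset.prod_erase hp]
      exact mul_dvd_mul_left p (Multiset.dvd_prod hp')
    refine hsq q (hpq ▸ hgy p hp) (Ideal.mem_of_dvd _ hmul ?_)
    rw [pow_two]
    exact Ideal.mul_mem_mul (mem_idealOver.2 (hpq ▸ hgφ p hp))
      (mem_idealOver.2 (hpq' ▸ hgφ p' (Multiset.mem_of_mem_erase hp')))
  have hle : (factors x).map g ≤ factors y := by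
    rw [Multiset.le_iff_subset hnodup]
    intro q hq
    obtain ⟨p, hp, rfl⟩ := Multiset.mem_map.1 hq
    exact hgy p hp
  simpa using Multiset.card_le_card hle

lemma exists_irreducible_dvd_map_of_dvd_monic {R F : Type*} [CommRing R] [IsDomain R] [Field F]
    (f : R →+* F) {p g : R[X]} (hg : g.Monic) (hp : ¬ IsUnit p) (hpg : p ∣ g) :
    ∃ q : F[X], Irreducible q ∧ q ∣ p.map f := by
  have hlead : IsUnit p.leadingCoeff := hg.isUnit_leadingCoeff_of_dvd hpg
  have hdeg : 0 < (p.map f).degree := by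
    rw [degree_map_eq_of_leadingCoeff_ne_zero f (hlead.map f).ne_zero]
    exact degree_pos_of_not_isUnit_of_dvd_monic hg hp hpg
  exact WfDvdMonoid.exists_irreducible_factor (fun h => hdeg.ne' (degree_eq_zero_of_isUnit h))
    (ne_zero_of_degree_gt hdeg)

lemma card_factors_map_fractionRing {R : Type*} (K : Type*) [CommRing R] [IsDomain R]
    [UniqueFactorizationMonoid R] [Field K] [Algebra R K] [IsFractionRing R K] {g : R[X]}
    (hg : g.IsPrimitive) :
    Multiset.card (factors (g.map (algebraMap R K))) = Multiset.card (factors g) := by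
  have hgK : g.map (algebraMap R K) ≠ 0 :=
    (Polynomial.map_ne_zero_iff (IsFractionRing.injective R K)).2 hg.ne_zero
  have hrel : Multiset.Rel Associated (factors (g.map (algebraMap R K)))
      ((factors g).map (mapRingHom (algebraMap R K))) := by
    refine factors_unique irreducible_of_factor (fun q hq => ?_) ?_
    · obtain ⟨p, hp, rfl⟩ := Multiset.mem_map.1 hq
      have hprim : p.IsPrimitive := isPrimitive_of_dvd hg (dvd_of_mem_factors hp)
      exact hprim.irreducible_iff_irreducible_map_fraction_map.1 (irreducible_of_factor p hp)
    · refine (factors_prod hgK).trans ?_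
      rw [Multiset.prod_hom]
      exact ((factors_prod hg.ne_zero).map (mapRingHom (algebraMap R K))).symm
  rw [Multiset.card_eq_card_of_rel hrel, Multiset.card_map]

end Counting

/-! ### The critical orbit -/

lemma critPoly_succ (d k : ℕ) : critPoly d (k + 1) = critPoly d k ^ d + X := rfl

lemma critPoly_one {d : ℕ} (hd : d ≠ 0) : critPoly d 1 = X := by
  simp [critPoly, hd]

lemma natDegree_critPoly_succ {d : ℕ} (hd : 2 ≤ d) (k : ℕ) :
    (critPoly d (k + 1)).natDegree = d ^ k := by
  induction k with
  | zero => simp [critPoly_one (show d ≠ 0 by omega)]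
  | succ k ih =>
    have hpow : (critPoly d (k + 1) ^ d).natDegree = d ^ (k + 1) := by
      rw [natDegree_pow, ih, pow_succ']
    rw [critPoly_succ, natDegree_add_eq_left_of_natDegree_lt, hpow]
    rw [natDegree_X, hpow]
    exact Nat.one_lt_pow k.succ_ne_zero hd

lemma monic_critPoly {d : ℕ} (hd : 2 ≤ d) {k : ℕ} (hk : k ≠ 0) : (critPoly d k).Monic := by
  induction k with
  | zero => exact absurd rfl hk
  | succ k ih =>
    rcases eq_or_ne k 0 with rfl | hk'
    · simp [critPoly_one (show d ≠ 0 by omega)]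
    · refine ((ih hk').pow d).add_of_left (degree_lt_degree ?_)
      obtain ⟨j, rfl⟩ := Nat.exists_eq_succ_of_ne_zero hk'
      rw [natDegree_X, natDegree_pow, natDegree_critPoly_succ hd, ← pow_succ']
      exact Nat.one_lt_pow j.succ_ne_zero hd

section Period

variable {R : Type*} [CommRing R]

/-- The period of the critical point `0` of `x ^ d + c` over `R[c] / (g)`; it is `0` when `0` is
not periodic. -/
def critPeriod (d : ℕ) (g : R[X]) : ℕ :=
  Function.minimalPeriod (fun x => x ^ d + AdjoinRoot.root g) 0

lemma mk_map_critPoly (d : ℕ) (g : R[X]) (k : ℕ) :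
    AdjoinRoot.mk g ((critPoly d k).map (Int.castRingHom R)) =
      (fun x => x ^ d + AdjoinRoot.root g)^[k] 0 := by
  induction k with
  | zero => simp [critPoly]
  | succ k ih => simp [critPoly_succ, Function.iterate_succ_apply', ← ih]

lemma dvd_map_critPoly_iff {d : ℕ} {g : R[X]} {k : ℕ} :
    g ∣ (critPoly d k).map (Int.castRingHom R) ↔ critPeriod d g ∣ k := by
  rw [critPeriod, ← Function.isPeriodicPt_iff_minimalPeriod_dvd, Function.IsPeriodicPt,
    Function.IsFixedPt, ← mk_map_critPoly, AdjoinRoot.mk_eq_zero]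

end Period

lemma critPoly_dvd_critPoly (d : ℕ) {k n : ℕ} (h : k ∣ n) : critPoly d k ∣ critPoly d n := by
  have hiff (j : ℕ) : critPoly d k ∣ critPoly d j ↔ critPeriod d (critPoly d k) ∣ j := by
    rw [← dvd_map_critPoly_iff, show Int.castRingHom ℤ = RingHom.id ℤ from RingHom.ext_int _ _,
      Polynomial.map_id]
  exact (hiff n).2 (((hiff k).1 dvd_rfl).trans h)

/-- The difference `f^{m+k}(0) - f^m(0)`. -/
def critDiff (d m k : ℕ) : ℤ[X] := critPoly d (m + k) - critPoly d m

/-- The quotient of `critDiff d (m + 1) k` by `critDiff d m k`, as a geometric sum; `F_{d,m+1,n}` is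
built from these. -/
def critDiffQuot (d m k : ℕ) : ℤ[X] :=
  ∑ i ∈ Finset.range d, critPoly d (m + k) ^ i * critPoly d m ^ (d - 1 - i)

lemma critDiff_zero (d k : ℕ) : critDiff d 0 k = critPoly d k := by
  simp [critDiff, critPoly]

lemma critDiff_succ_eq_sub_pow (d m k : ℕ) :
    critDiff d (m + 1) k = critPoly d (m + k) ^ d - critPoly d m ^ d := by
  rw [critDiff, Nat.add_right_comm, critPoly_succ, critPoly_succ, add_sub_add_right_eq_sub]

lemma critDiffQuot_mul_critDiff (d m k : ℕ) :
    critDiffQuot d m k * critDiff d m k = critDiff d (m + 1) k := by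
  rw [critDiff_succ_eq_sub_pow, critDiffQuot, critDiff, geom_sum₂_mul]

lemma critDiff_eq_mul_prod (d m k : ℕ) :
    critDiff d m k = critPoly d k * ∏ j ∈ Finset.range m, critDiffQuot d j k := by
  induction m with
  | zero => simp [critDiff_zero]
  | succ m ih => rw [← critDiffQuot_mul_critDiff, ih, Finset.prod_range_succ]; ring

lemma critDiffQuot_zero {d : ℕ} (hd : d ≠ 0) (k : ℕ) :
    critDiffQuot d 0 k = critPoly d k ^ (d - 1) := by
  obtain ⟨d, rfl⟩ := Nat.exists_eq_succ_of_ne_zero hd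
  rw [critDiffQuot, Finset.sum_range_succ, Finset.sum_eq_zero fun i hi => ?_]
  · simp
  · have : d - i ≠ 0 := by have := Finset.mem_range.1 hi; omega
    simp [critPoly, this]

lemma monic_critDiff {d : ℕ} (hd : 2 ≤ d) (m : ℕ) {k : ℕ} (hk : k ≠ 0) :
    (critDiff d m k).Monic := by
  rcases eq_or_ne m 0 with rfl | hm
  · rw [critDiff_zero]
    exact monic_critPoly hd hk
  · refine (monic_critPoly hd (by omega)).sub_of_left (degree_lt_degree ?_)
    obtain ⟨j, rfl⟩ := Nat.exists_eq_succ_of_ne_zero hm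
    rw [Nat.succ_add, natDegree_critPoly_succ hd, natDegree_critPoly_succ hd]
    exact Nat.pow_lt_pow_right hd (by omega)

lemma monic_critDiffQuot {d : ℕ} (hd : 2 ≤ d) (m : ℕ) {k : ℕ} (hk : k ≠ 0) :
    (critDiffQuot d m k).Monic := by
  refine (monic_critDiff hd m hk).of_mul_monic_right ?_
  rw [critDiffQuot_mul_critDiff]
  exact monic_critDiff hd (m + 1) hk

/-! ### Misiurewicz polynomials as Möbius products of polynomials -/

/-- The common factor of `f^{m+k}(0)` and `f^m(0)`, for `k ∣ n`, that dividing `F_{d,m+1,n}` by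
`F_{d,1,n}` removes. -/
def commonFactor (d m n k : ℕ) : ℤ[X] := if n ∣ m then critPoly d k else 1

/-- The cofactor of `commonFactor d m n k` in `f^j(0)`, meant for `j = m` and `j = m + k`. -/
def orbitCofactor (d m n k j : ℕ) : ℤ[X] := critPoly d j /ₘ commonFactor d m n k

/-- The base of the power with exponent `μ(n/k)` in `G_{d,m+1,n}`. -/
def misiurewiczFactor (d m n k : ℕ) : ℤ[X] :=
  ∑ i ∈ Finset.range d,
    orbitCofactor d m n k (m + k) ^ i * orbitCofactor d m n k m ^ (d - 1 - i)

lemma monic_commonFactor {d : ℕ} (hd : 2 ≤ d) (m n : ℕ) {k : ℕ} (hk : k ≠ 0) :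
    (commonFactor d m n k).Monic := by
  rw [commonFactor]
  split_ifs
  exacts [monic_critPoly hd hk, monic_one]

section Cofactor

variable {d : ℕ} (hd : 2 ≤ d) {m n k : ℕ} (hn : n ≠ 0) (hk : k ∣ n)
include hd hn hk

lemma commonFactor_mul_orbitCofactor {j : ℕ} (hj : n ∣ m → k ∣ j) :
    commonFactor d m n k * orbitCofactor d m n k j = critPoly d j := by
  obtain ⟨b, hb⟩ : commonFactor d m n k ∣ critPoly d j := by
    rw [commonFactor]
    split_ifs with hnm
    exacts [critPoly_dvd_critPoly d (hj hnm), one_dvd _]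
  rw [orbitCofactor, hb,
    mul_divByMonic_cancel_left _ (monic_commonFactor hd m n (ne_zero_of_dvd_ne_zero hn hk))]

lemma commonFactor_mul_orbitCofactor_left :
    commonFactor d m n k * orbitCofactor d m n k m = critPoly d m :=
  commonFactor_mul_orbitCofactor hd hn hk hk.trans

lemma commonFactor_mul_orbitCofactor_add :
    commonFactor d m n k * orbitCofactor d m n k (m + k) = critPoly d (m + k) :=
  commonFactor_mul_orbitCofactor hd hn hk fun hnm => (hk.trans hnm).add dvd_rfl

lemma commonFactor_mul_orbitCofactor_sub :
    commonFactor d m n k * (orbitCofactor d m n k (m + k) - orbitCofactor d m n k m) =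
      critDiff d m k := by
  rw [mul_sub, commonFactor_mul_orbitCofactor_add hd hn hk,
    commonFactor_mul_orbitCofactor_left hd hn hk, critDiff]

lemma commonFactor_pow_mul_misiurewiczFactor :
    commonFactor d m n k ^ (d - 1) * misiurewiczFactor d m n k = critDiffQuot d m k := by
  rw [misiurewiczFactor, ← geom_sum₂_mul_left, commonFactor_mul_orbitCofactor_add hd hn hk,
    commonFactor_mul_orbitCofactor_left hd hn hk, critDiffQuot]

lemma monic_misiurewiczFactor : (misiurewiczFactor d m n k).Monic := by
  have hk0 : k ≠ 0 := ne_zero_of_dvd_ne_zero hn hk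
  refine ((monic_commonFactor hd m n hk0).pow (d - 1)).of_mul_monic_left ?_
  rw [commonFactor_pow_mul_misiurewiczFactor hd hn hk]
  exact monic_critDiffQuot hd m hk0

end Cofactor

lemma misiurewiczFactor_two_one_one : misiurewiczFactor 2 1 1 1 = X + 2 := by
  have hmul := commonFactor_pow_mul_misiurewiczFactor (d := 2) (m := 1) le_rfl one_ne_zero dvd_rfl
  rw [commonFactor, if_pos dvd_rfl, critPoly_one two_ne_zero] at hmul
  have hquot : critDiffQuot 2 1 1 = X ^ (2 - 1) * (X + 2) := by
    simp [critDiffQuot, Finset.sum_range_succ, critPoly]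
    ring
  exact mul_left_cancel₀ (pow_ne_zero _ X_ne_zero) (hmul.trans hquot)

lemma FRat_succ {d : ℕ} (hd : 2 ≤ d) (m n : ℕ) :
    FRat d (m + 1) n =
      ∏ k ∈ n.divisors, toRF (critDiffQuot d m k) ^ ArithmeticFunction.moebius (n / k) := by
  refine Finset.prod_congr rfl fun k hk => ?_
  have hdiff : toRF (critDiff d m k) ≠ 0 :=
    (map_ne_zero_iff _ (IsFractionRing.injective ℤ[X] RF)).2
      (monic_critDiff hd m (Nat.pos_of_mem_divisors hk).ne').ne_zero
  have hsub (m : ℕ) :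
      toRF (critPoly d (m + k)) - toRF (critPoly d m) = toRF (critDiff d m k) := by
    simp only [toRF, critDiff, map_sub]
  congr 1
  rw [Nat.add_sub_cancel, hsub, hsub, div_eq_iff hdiff, ← critDiffQuot_mul_critDiff, toRF, map_mul]
  rfl

lemma GRat_succ {d : ℕ} (hd : 2 ≤ d) (m n : ℕ) :
    GRat d (m + 1) n =
      ∏ k ∈ n.divisors, toRF (misiurewiczFactor d m n k) ^ ArithmeticFunction.moebius (n / k) := by
  have hquot {k : ℕ} (hk : k ∈ n.divisors) :
      commonFactor d m n k ^ (d - 1) * misiurewiczFactor d m n k = critDiffQuot d m k :=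
    commonFactor_pow_mul_misiurewiczFactor hd (Nat.mem_divisors.1 hk).2
      (Nat.dvd_of_mem_divisors hk)
  rw [GRat, Nat.add_sub_cancel, FRat_succ hd m, show FRat d 1 n = FRat d (0 + 1) n from rfl,
    FRat_succ hd 0]
  split_ifs with hnm
  · rw [← Finset.prod_div_distrib]
    refine Finset.prod_congr rfl fun k hk => ?_
    have hcrit : toRF (critPoly d k) ≠ 0 :=
      (map_ne_zero_iff _ (IsFractionRing.injective ℤ[X] RF)).2
        (monic_critPoly hd (Nat.pos_of_mem_divisors hk).ne').ne_zero
    rw [← div_zpow, ← hquot hk, critDiffQuot_zero (by omega), commonFactor, if_pos hnm]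
    simp only [toRF, map_mul, map_pow] at hcrit ⊢
    rw [mul_div_cancel_left₀ _ (pow_ne_zero _ hcrit)]
  · refine Finset.prod_congr rfl fun k hk => ?_
    rw [← hquot hk, commonFactor, if_neg hnm, one_pow, one_mul]

lemma IsG0.monic {d n : ℕ} {G : ℤ[X]} (hG : IsG0 d n G) (hd : 2 ≤ d) : G.Monic :=
  monic_of_algebraMap_eq_prod_zpow
    (fun _ hk => monic_critPoly hd (Nat.pos_of_mem_divisors hk).ne') hG

lemma IsMisiurewicz.monic {d m n : ℕ} {G : ℤ[X]} (hG : IsMisiurewicz d (m + 1) n G)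
    (hd : 2 ≤ d) : G.Monic :=
  monic_of_algebraMap_eq_prod_zpow
    (fun _ hk => monic_misiurewiczFactor hd (Nat.mem_divisors.1 hk).2 (Nat.dvd_of_mem_divisors hk))
    (hG.trans (GRat_succ hd m n))

/-! ### Reduction modulo `d` -/

section CharP

variable {d : ℕ} {R : Type*} [CommRing R] [CharP R d]

lemma separable_map_critPoly {k : ℕ} (hk : k ≠ 0) :
    ((critPoly d k).map (Int.castRingHom R)).Separable := by
  obtain ⟨k, rfl⟩ := Nat.exists_eq_succ_of_ne_zero hk
  have hderiv : derivative ((critPoly d (k + 1)).map (Int.castRingHom R)) = 1 := by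
    simp [critPoly_succ, derivative_pow]
  rw [separable_def, hderiv]
  exact isCoprime_one_right

variable [hd : Fact d.Prime]

lemma map_critDiff (m k : ℕ) :
    (critDiff d m k).map (Int.castRingHom R) =
      (critPoly d k).map (Int.castRingHom R) ^ d ^ m := by
  induction m with
  | zero => rw [critDiff_zero, pow_zero, pow_one]
  | succ m ih =>
    rw [pow_succ, pow_mul, ← ih, critDiff_succ_eq_sub_pow, critDiff, Polynomial.map_sub,
      Polynomial.map_pow, Polynomial.map_pow, Polynomial.map_sub, sub_pow_char]

lemma map_critDiffQuot [IsDomain R] (m k : ℕ) :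
    (critDiffQuot d m k).map (Int.castRingHom R) =
      (critPoly d k).map (Int.castRingHom R) ^ (d ^ m * (d - 1)) := by
  rw [pow_mul, ← map_critDiff, critDiff, Polynomial.map_sub, ← geom_sum₂_eq_sub_pow d, critDiffQuot]
  simp only [Polynomial.map_sum, Polynomial.map_mul, Polynomial.map_pow]

lemma map_misiurewiczFactor [IsDomain R] (m : ℕ) {n k : ℕ} (hn : n ≠ 0) (hk : k ∣ n) :
    (misiurewiczFactor d m n k).map (Int.castRingHom R) =
      (critPoly d k).map (Int.castRingHom R) ^
        ((d ^ m - if n ∣ m then 1 else 0) * (d - 1)) := by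
  have hcrit : (critPoly d k).map (Int.castRingHom R) ≠ 0 :=
    ((monic_critPoly hd.out.two_le (ne_zero_of_dvd_ne_zero hn hk)).map _).ne_zero
  have hmul := congrArg (Polynomial.map (Int.castRingHom R))
    (commonFactor_pow_mul_misiurewiczFactor (m := m) hd.out.two_le hn hk)
  rw [map_critDiffQuot, Polynomial.map_mul, Polynomial.map_pow, commonFactor] at hmul
  split_ifs at hmul ⊢
  · apply mul_left_cancel₀ (pow_ne_zero (d - 1) hcrit)
    rw [hmul, ← pow_add, ← one_add_mul,
      Nat.add_sub_cancel' (Nat.one_le_pow m d hd.out.pos)]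
  · rwa [Polynomial.map_one, one_pow, one_mul] at hmul

end CharP

section Reduction

/-- The reduction homomorphism `ℤ[c] → 𝔽_d[c]`. -/
abbrev reduction (d : ℕ) : ℤ[X] →+* (ZMod d)[X] := mapRingHom (Int.castRingHom (ZMod d))

variable {d : ℕ} {q : (ZMod d)[X]}

lemma surjective_reduction : Function.Surjective (reduction d) :=
  map_surjective _ (ZMod.ringHom_surjective _)

lemma critPoly_mem_idealOver_iff {k : ℕ} :
    critPoly d k ∈ idealOver (reduction d) q ↔ critPeriod d q ∣ k :=
  mem_idealOver.trans dvd_map_critPoly_iff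

variable [hd : Fact d.Prime]

lemma IsMisiurewicz.reduction_eq_pow {m n : ℕ} {G G₀ : ℤ[X]} (hG : IsMisiurewicz d (m + 1) n G)
    (hG₀ : IsG0 d n G₀) : ∃ e : ℕ, reduction d G = reduction d G₀ ^ e := by
  refine ⟨(d ^ m - if n ∣ m then 1 else 0) * (d - 1), ?_⟩
  have hGred := algebraMap_map_eq_prod_zpow (L := FractionRing (ZMod d)[X]) (reduction d)
    (fun k hk => ((monic_misiurewiczFactor hd.out.two_le (Nat.mem_divisors.1 hk).2
      (Nat.dvd_of_mem_divisors hk)).map _).ne_zero) (hG.trans (GRat_succ hd.out.two_le m n))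
  have hG₀red := algebraMap_map_eq_prod_zpow (L := FractionRing (ZMod d)[X]) (reduction d)
    (fun k hk => ((monic_critPoly hd.out.two_le
      (Nat.pos_of_mem_divisors hk).ne').map _).ne_zero) hG₀
  apply IsFractionRing.injective (ZMod d)[X] (FractionRing (ZMod d)[X])
  rw [map_pow, hGred, hG₀red, ← Finset.prod_pow]
  refine Finset.prod_congr rfl fun k hk => ?_
  rw [coe_mapRingHom, map_misiurewiczFactor m (Nat.mem_divisors.1 hk).2
    (Nat.dvd_of_mem_divisors hk), map_pow]
  simp only [← zpow_natCast]
  exact zpow_comm _ _ _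

lemma valuation_map_critPoly {v : IsDedekindDomain.HeightOneSpectrum (ZMod d)[X]}
    (hv : v.asIdeal = Ideal.span {q}) {k : ℕ} (hk : k ≠ 0) :
    v.valuation (FractionRing (ZMod d)[X]) (algebraMap _ _ (reduction d (critPoly d k))) =
      if critPeriod d q ∣ k then
        v.valuation (FractionRing (ZMod d)[X])
          (algebraMap _ _ (reduction d (critPoly d (critPeriod d q)))) else 1 := by
  have hmem (p : (ZMod d)[X]) : p ∈ v.asIdeal ↔ q ∣ p := by
    rw [hv, Ideal.mem_span_singleton]
  split_ifs with hdvd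
  · obtain ⟨b, hb⟩ := _root_.map_dvd (reduction d) (critPoly_dvd_critPoly d hdvd)
    have hqN : q ∣ reduction d (critPoly d (critPeriod d q)) := dvd_map_critPoly_iff.2 dvd_rfl
    have hqb : ¬ q ∣ b := by
      intro hqb
      have hunit : IsUnit q := (separable_map_critPoly (R := ZMod d) hk).squarefree q
        ((mul_dvd_mul hqN hqb).trans hb.symm.dvd)
      exact v.isPrime.ne_top (hv.trans (Ideal.span_singleton_eq_top.2 hunit))
    rw [hb, map_mul, map_mul, v.valuation_eq_one_iff_notMem.2 (mt (hmem b).1 hqb), mul_one]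
  · exact v.valuation_eq_one_iff_notMem.2 fun h => hdvd (dvd_map_critPoly_iff.1 ((hmem _).1 h))

lemma IsG0.critPeriod_eq {n : ℕ} (hn : n ≠ 0) {G₀ : ℤ[X]} (hG₀ : IsG0 d n G₀)
    (hq : Irreducible q) (hdvd : q ∣ reduction d G₀) : critPeriod d q = n := by
  let v : IsDedekindDomain.HeightOneSpectrum (ZMod d)[X] :=
    ⟨Ideal.span {q}, (Ideal.span_singleton_prime hq.ne_zero).2 hq.prime,
      mt Ideal.span_singleton_eq_bot.1 hq.ne_zero⟩
  have hval : v.valuation (FractionRing (ZMod d)[X]) (algebraMap _ _ (reduction d G₀)) < 1 :=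
    (v.valuation_lt_one_iff_mem _).2 (Ideal.mem_span_singleton.2 hdvd)
  have hcrit {k : ℕ} (hk : k ≠ 0) : reduction d (critPoly d k) ≠ 0 :=
    ((monic_critPoly hd.out.two_le hk).map _).ne_zero
  obtain ⟨y, hy, hvy⟩ : ∃ y ≠ 0, ∀ k ≠ 0,
      v.valuation (FractionRing (ZMod d)[X]) (algebraMap _ _ (reduction d (critPoly d k))) =
        if critPeriod d q ∣ k then y else 1 := by
    rcases eq_or_ne (critPeriod d q) 0 with hper | hper
    · refine ⟨1, one_ne_zero, fun k hk => ?_⟩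
      exact (valuation_map_critPoly (v := v) rfl hk).trans (by simp [hper, hk])
    · refine ⟨_, ?_, fun k hk => valuation_map_critPoly rfl hk⟩
      exact (Valuation.ne_zero_iff _).2
        ((map_ne_zero_iff _ (IsFractionRing.injective (ZMod d)[X] _)).2 (hcrit hper))
  by_contra hne
  rw [algebraMap_map_eq_prod_zpow (reduction d)
    (fun k hk => hcrit (Nat.pos_of_mem_divisors hk).ne') hG₀, map_prod] at hval
  simp only [map_zpow₀] at hval
  rw [Finset.prod_congr rfl fun k hk => by rw [hvy k (Nat.pos_of_mem_divisors hk).ne'],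
    prod_divisors_ite_zpow_moebius hy _ hn, if_neg (Ne.symm hne)] at hval
  exact lt_irrefl _ hval

lemma natCast_notMem_idealOver_sq (hq : Irreducible q) :
    (d : ℤ[X]) ∉ idealOver (reduction d) q ^ 2 := by
  have hprime : Prime (d : ℤ[X]) := by
    rw [← Int.cast_natCast, ← eq_intCast C, prime_C_iff]
    exact Nat.prime_iff_prime_int.1 hd.out
  have hker : RingHom.ker (reduction d) = Ideal.span {(d : ℤ[X])} := by
    rw [ker_mapRingHom, ZMod.ker_intCastRingHom, Ideal.map_span, Set.image_singleton]
    simp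
  exact prime_notMem_idealOver_sq surjective_reduction hprime hker hq.ne_zero hq.not_isUnit

lemma critDiffQuot_mem_idealOver (m : ℕ) {k : ℕ} (hk : critPeriod d q ∣ k) :
    critDiffQuot d m k ∈ idealOver (reduction d) q := by
  have hexp : d ^ m * (d - 1) ≠ 0 :=
    mul_ne_zero (pow_ne_zero m hd.out.ne_zero) (Nat.sub_ne_zero_of_lt hd.out.one_lt)
  rw [mem_idealOver, coe_mapRingHom, map_critDiffQuot]
  exact dvd_pow (dvd_map_critPoly_iff.2 hk) hexp

lemma prod_critDiffQuot_mem_idealOver_pow (m : ℕ) {k : ℕ} (hk : critPeriod d q ∣ k) :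
    ∏ j ∈ Finset.range (m + 1), critDiffQuot d j k ∈ idealOver (reduction d) q ^ (m + (d - 1)) := by
  rw [Finset.prod_range_succ', critDiffQuot_zero hd.out.ne_zero, pow_add]
  refine Ideal.mul_mem_mul ?_ (Ideal.pow_mem_pow (critPoly_mem_idealOver_iff.2 hk) _)
  have hprod := Ideal.prod_mem_prod (s := Finset.range m) (I := fun _ => idealOver (reduction d) q)
    (x := fun j => critDiffQuot d (j + 1) k) fun j _ => critDiffQuot_mem_idealOver (j + 1) hk
  rwa [Finset.prod_const, Finset.card_range] at hprod

section Period

variable {m n : ℕ} (hn : n ≠ 0) (hm : m ≠ 0) (hper : critPeriod d q = n)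
include hn hm hper

lemma orbitCofactor_sub_mem_idealOver_sq (hexc : ¬ (d = 2 ∧ m = 1 ∧ n = 1)) :
    orbitCofactor d m n n (m + n) - orbitCofactor d m n n m ∈ idealOver (reduction d) q ^ 2 := by
  have hd₂ := hd.out.two_le
  obtain ⟨m, rfl⟩ := Nat.exists_eq_succ_of_ne_zero hm
  have hprod := prod_critDiffQuot_mem_idealOver_pow m hper.dvd
  have hsub := commonFactor_mul_orbitCofactor_sub (m := m + 1) hd₂ hn dvd_rfl
  rw [critDiff_eq_mul_prod, commonFactor] at hsub
  split_ifs at hsub with hnm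
  · rw [mul_left_cancel₀ (monic_critPoly hd₂ hn).ne_zero hsub]
    refine Ideal.pow_le_pow_right ?_ hprod
    have : m = 0 → n = 1 := by rintro rfl; exact Nat.dvd_one.1 hnm
    omega
  · rw [one_mul] at hsub
    rw [hsub, pow_two]
    exact Ideal.mul_mem_mul (critPoly_mem_idealOver_iff.2 hper.dvd)
      (Ideal.pow_le_self (by omega) hprod)

lemma orbitCofactor_notMem_idealOver (hq : ¬ IsUnit q) :
    orbitCofactor d m n n m ∉ idealOver (reduction d) q := by
  have hmul := commonFactor_mul_orbitCofactor_left (m := m) hd.out.two_le hn dvd_rfl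
  rw [commonFactor] at hmul
  intro hmem
  split_ifs at hmul with hnm
  · refine hq ((separable_map_critPoly (R := ZMod d) hm).squarefree q ?_)
    rw [← hmul, Polynomial.map_mul]
    exact mul_dvd_mul (dvd_map_critPoly_iff.2 hper.dvd) (mem_idealOver.1 hmem)
  · rw [one_mul] at hmul
    rw [hmul, critPoly_mem_idealOver_iff, hper] at hmem
    exact hnm hmem

lemma misiurewiczFactor_notMem_idealOver_sq (hq : Irreducible q) :
    misiurewiczFactor d m n n ∉ idealOver (reduction d) q ^ 2 := by
  have hmax := isMaximal_idealOver surjective_reduction hq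
  by_cases hexc : d = 2 ∧ m = 1 ∧ n = 1
  · obtain ⟨rfl, rfl, rfl⟩ := hexc
    rw [misiurewiczFactor_two_one_one]
    intro hmem
    have hderiv := derivation_mem_of_mem_sq Polynomial.derivative' hmem
    rw [show Polynomial.derivative' (X + 2 : ℤ[X]) = 1 by simp] at hderiv
    exact hmax.ne_top ((Ideal.eq_top_iff_one _).2 hderiv)
  · exact geom_sum₂_notMem_sq (orbitCofactor_sub_mem_idealOver_sq hn hm hper hexc)
      (orbitCofactor_notMem_idealOver hn hm hper hq.not_isUnit) (natCast_notMem_idealOver_sq hq)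

end Period

lemma misiurewiczFactor_notMem_idealOver (m : ℕ) {n k : ℕ} (hn : n ≠ 0) (hk : k ∣ n)
    (hper : ¬ critPeriod d q ∣ k) (hq : Prime q) :
    misiurewiczFactor d m n k ∉ idealOver (reduction d) q := by
  rw [mem_idealOver, coe_mapRingHom, map_misiurewiczFactor m hn hk]
  exact fun h => hper (dvd_map_critPoly_iff.1 (hq.dvd_of_dvd_pow h))

lemma IsMisiurewicz.notMem_idealOver_sq {m n : ℕ} {G : ℤ[X]} (hG : IsMisiurewicz d (m + 1) n G)
    (hn : n ≠ 0) (hm : m ≠ 0) (hq : Irreducible q) (hper : critPeriod d q = n) :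
    G ∉ idealOver (reduction d) q ^ 2 := by
  have hmax := isMaximal_idealOver surjective_reduction hq
  refine notMem_pow_of_algebraMap_eq_prod_zpow (hG.trans (GRat_succ hd.out.two_le m n))
    (fun k hk => ?_) (Nat.mem_divisors_self n hn) ?_
    (misiurewiczFactor_notMem_idealOver_sq hn hm hper hq) fun k hk hkn => ?_
  · exact (monic_misiurewiczFactor hd.out.two_le hn (Nat.dvd_of_mem_divisors hk)).ne_zero
  · rw [Nat.div_self hn.bot_lt, ArithmeticFunction.moebius_apply_one]
  · have hkdvd : k ∣ n := Nat.dvd_of_mem_divisors hk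
    exact misiurewiczFactor_notMem_idealOver m hn hkdvd
      (fun h => hkn (Nat.dvd_antisymm hkdvd (hper ▸ h))) hq.prime

section Factors

open UniqueFactorizationMonoid

lemma IsMisiurewicz.exists_mem_factors_dvd_reduction {m n : ℕ} {G G₀ p : ℤ[X]}
    (hG : IsMisiurewicz d (m + 1) n G) (hG₀ : IsG0 d n G₀) (hp : p ∈ factors G) :
    ∃ q ∈ factors (reduction d G₀), q ∣ reduction d p := by
  have hpG : p ∣ G := dvd_of_mem_factors hp
  have hG₀red : reduction d G₀ ≠ 0 := ((hG₀.monic hd.out.two_le).map _).ne_zero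
  obtain ⟨q, hq, hqp⟩ := exists_irreducible_dvd_map_of_dvd_monic (Int.castRingHom (ZMod d))
    (hG.monic hd.out.two_le) (irreducible_of_factor p hp).not_isUnit hpG
  obtain ⟨e, he⟩ := hG.reduction_eq_pow hG₀
  have hqG₀ : q ∣ reduction d G₀ :=
    hq.prime.dvd_of_dvd_pow (he ▸ hqp.trans (_root_.map_dvd (reduction d) hpG))
  obtain ⟨q', hq', hqq'⟩ := exists_mem_factors_of_dvd hG₀red hq hqG₀
  exact ⟨q', hq', hqq'.symm.dvd.trans hqp⟩

end Factors

end Reduction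

/-- For a prime `d` and `m ≥ 2`, `n ≥ 1`, the number of irreducible factors
of `G_{d,m,n}` over `ℚ` is at most the number of irreducible factors of the reduction of
`G_{d,0,n}` modulo `d` over `𝔽_d`. -/
theorem misiurewicz_factor_count_le (d m n : ℕ) [hd : Fact d.Prime] (hm : 2 ≤ m) (hn : 1 ≤ n)
    (G G0 : Polynomial ℤ) (hG : IsMisiurewicz d m n G) (hG0 : IsG0 d n G0) :
    Multiset.card (UniqueFactorizationMonoid.factors (G.map (Int.castRingHom ℚ))) ≤
      Multiset.card (UniqueFactorizationMonoid.factors (G0.map (Int.castRingHom (ZMod d)))) := by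
  obtain ⟨m, rfl⟩ : ∃ m', m = m' + 1 := ⟨m - 1, by omega⟩
  have hn₀ : n ≠ 0 := by omega
  have hGmonic : G.Monic := hG.monic hd.out.two_le
  calc Multiset.card (UniqueFactorizationMonoid.factors (G.map (Int.castRingHom ℚ)))
      = Multiset.card (UniqueFactorizationMonoid.factors G) :=
        card_factors_map_fractionRing ℚ hGmonic.isPrimitive
    _ ≤ Multiset.card (UniqueFactorizationMonoid.factors (reduction d G0)) := by
        refine card_factors_le_card_factors_of_notMem_sq (reduction d) hGmonic.ne_zero
          (fun p hp => hG.exists_mem_factors_dvd_reduction hG0 hp) fun q hq => ?_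
        have hqirr : Irreducible q := UniqueFactorizationMonoid.irreducible_of_factor q hq
        have hper : critPeriod d q = n :=
          hG0.critPeriod_eq hn₀ hqirr (UniqueFactorizationMonoid.dvd_of_mem_factors hq)
        exact hG.notMem_idealOver_sq hn₀ (by omega) hqirr hper
end
end

section
/- Let d be a rational prime, m ≥ 2, n ≥ 1, and let c_0 be a root of the Misiurewicz polynomial G_{d,m,n}(c). Set K = ℚ(c_0) with ring of integers O_K. Then d does not divide the index [O_K : ℤ[c_0]]. -/
open Polynomial

noncomputable section

/-!
Write `f(x) = x ^ d + c₀`, `aᵢ = fⁱ(0)` and `R = ℤ[c₀]`. The critical orbit `(aᵢ)` is preperiodic: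
otherwise `G_{d,m,n}(c₀)` would be a quotient of products of nonzero differences `aᵢ₊ₖ - aᵢ`.

It suffices to find `π ∈ R`, nonzero and with `R/π` reduced, such that `d` divides a power of `π`:
if `x ∈ 𝓞 K` and `π x ∈ R`, then an integral equation for `x` shows that `π` divides a power of
`π x` in `R`, hence `π x` itself, so `x ∈ R`; thus `R` is saturated at `d`.

If `0` is periodic, take `π = d`. Otherwise let `l + 1` be the length of the tail, `n` the period
and `π = aₙ`. Then `d ∣ π ^ (d ^ (l + 1))`, because `f` is the Frobenius modulo `d` up to
translation and `f^(l+1)(π) = f^(l+1)(0)`. Conversely `π ∣ d`: the difference `a_{l+n} - a_l` is a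
multiple of `π` and divides `d a_l ^ (d - 1)`. If `n ∤ l`, then `a_l` is coprime to `π`; if `n ∣ l`,
then both `a_l` and `a_{l+n}` are congruent to `π` modulo `π ^ d`, so `π ^ d ∣ d a_l ^ (d - 1)`.

In either case `π` divides `d` and some `aₖ` with `k ≥ 1`, so `R/π` is a quotient of
`𝔽_d[X]/(critPoly d k)`, which is reduced because `critPoly d k` has derivative `1` modulo `d`.
-/

/-! ### Iterates of maps compatible with differences -/

section Iterate

variable {R : Type*} [CommRing R] {F : R → R} {d : ℕ}

theorem sub_dvd_iterate_sub (hF : ∀ x y, x - y ∣ F x - F y) (n : ℕ) (x y : R) :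
    x - y ∣ F^[n] x - F^[n] y := by
  induction n with
  | zero => exact dvd_rfl
  | succ n ih =>
    rw [Function.iterate_succ_apply', Function.iterate_succ_apply']
    exact ih.trans (hF _ _)

theorem map_zero_dvd_iterate_zero (hF : ∀ x y, x - y ∣ F x - F y) (n : ℕ) :
    F 0 ∣ F^[n] 0 := by
  induction n with
  | zero => exact dvd_zero _
  | succ n ih =>
    rw [Function.iterate_succ_apply']
    exact (dvd_iff_dvd_of_dvd_sub (ih.trans (by simpa using hF (F^[n] 0) 0))).2 dvd_rfl

theorem pow_pred_mul_sub_dvd_pow_sub_pow {p x y : R} (hx : p ∣ x) (hy : p ∣ y) (d : ℕ) :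
    p ^ (d - 1) * (x - y) ∣ x ^ d - y ^ d := by
  obtain ⟨a, rfl⟩ := hx
  obtain ⟨b, rfl⟩ := hy
  cases d with
  | zero => simp
  | succ e =>
    obtain ⟨s, hs⟩ := sub_dvd_pow_sub_pow a b (e + 1)
    refine ⟨s, ?_⟩
    rw [mul_pow, mul_pow, ← mul_sub, hs, Nat.add_sub_cancel]
    ring

theorem sub_dvd_natCast_mul_pow_pred [IsDomain R] {u v : R} (hne : u ≠ v) (h : u ^ d = v ^ d) :
    u - v ∣ (d : R) * v ^ (d - 1) := by
  obtain ⟨k, hk⟩ := Polynomial.powAddExpansion v (u - v) d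
  rw [add_sub_cancel, h] at hk
  refine ⟨-k, mul_right_cancel₀ (sub_ne_zero.2 hne) ?_⟩
  linear_combination -hk

theorem dvd_of_pow_dvd_mul_pow_pred [IsDomain R] {p w a : R} (hp : p ≠ 0) (hd : 2 ≤ d)
    (hw : p ^ d ∣ w - p) (h : p ^ d ∣ a * w ^ (d - 1)) : p ∣ a := by
  obtain ⟨t, ht⟩ := hw
  obtain ⟨e, rfl⟩ := Nat.exists_eq_add_of_le' hd
  rw [show w = p * (1 + p * (p ^ e * t)) by linear_combination ht] at h
  have hdvd : p ∣ a * (1 + p * (p ^ e * t)) ^ (e + 1) := by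
    rw [← mul_dvd_mul_iff_left (pow_ne_zero (e + 1) hp)]
    convert h using 1
    · ring
    · rw [show e + 2 - 1 = e + 1 from rfl, mul_pow]
      ring
  have hcop : IsCoprime p (1 + p * (p ^ e * t)) := ⟨-(p ^ e * t), 1, by ring⟩
  exact hcop.pow_right.dvd_of_dvd_mul_right hdvd

variable (hF : ∀ x y, x ^ d - y ^ d ∣ F x - F y)
include hF

theorem pow_mul_iterate_sub_dvd (j N : ℕ) :
    F 0 ^ ((d - 1) * N) * (F^[j + 1] 0 - F^[j] 0) ∣ F^[j + N + 1] 0 - F^[j + N] 0 := by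
  induction N with
  | zero => simp
  | succ N ih =>
    have hF' : ∀ x y, x - y ∣ F x - F y := fun x y => (sub_dvd_pow_sub_pow x y d).trans (hF x y)
    have hpow : F 0 ^ (d - 1) * (F^[j + N + 1] 0 - F^[j + N] 0) ∣
        F^[j + N + 1] 0 ^ d - F^[j + N] 0 ^ d :=
      pow_pred_mul_sub_dvd_pow_sub_pow (map_zero_dvd_iterate_zero hF' _)
        (map_zero_dvd_iterate_zero hF' _) d
    calc F 0 ^ ((d - 1) * (N + 1)) * (F^[j + 1] 0 - F^[j] 0)
        = F 0 ^ (d - 1) * (F 0 ^ ((d - 1) * N) * (F^[j + 1] 0 - F^[j] 0)) := by ring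
      _ ∣ F 0 ^ (d - 1) * (F^[j + N + 1] 0 - F^[j + N] 0) := mul_dvd_mul_left _ ih
      _ ∣ F (F^[j + N + 1] 0) - F (F^[j + N] 0) := hpow.trans (hF _ _)
      _ = F^[j + (N + 1) + 1] 0 - F^[j + (N + 1)] 0 := by
        simp only [← Function.iterate_succ_apply' F, Nat.succ_eq_add_one, add_assoc]

theorem map_zero_pow_dvd_iterate_sub_iterate (j : ℕ) :
    F 0 ^ d ∣ F^[j + 2] 0 - F^[j + 1] 0 := by
  have h := pow_mul_iterate_sub_dvd hF 0 (j + 1)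
  simp only [zero_add, Function.iterate_one, Function.iterate_zero, id, sub_zero,
    ← pow_succ] at h
  refine (pow_dvd_pow _ ?_).trans h
  rw [mul_add_one]
  omega

theorem map_zero_pow_dvd_iterate_sub_map_zero (j : ℕ) : F 0 ^ d ∣ F^[j + 1] 0 - F 0 := by
  induction j with
  | zero => simp
  | succ j ih => simpa using dvd_add (map_zero_pow_dvd_iterate_sub_iterate hF j) ih

theorem isUnit_map_zero_of_iterate_mem_periodicPts [IsDomain R] (hd : 2 ≤ d) {j : ℕ}
    (hper : F^[j] 0 ∈ Function.periodicPts F) (hfix : ¬ Function.IsFixedPt F (F^[j] 0)) :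
    IsUnit (F 0) := by
  obtain ⟨N, hN, hjN⟩ := hper
  have hstep : F^[j + 1] 0 - F^[j] 0 ≠ 0 := by
    rwa [Function.iterate_succ_apply', sub_ne_zero]
  have hreturn : F^[j + N] 0 = F^[j] 0 := by
    rw [add_comm, Function.iterate_add_apply]
    exact hjN
  have hdvd := pow_mul_iterate_sub_dvd hF j N
  rw [Function.iterate_succ_apply' F (j + N), hreturn, ← Function.iterate_succ_apply' F] at hdvd
  have hpow : F 0 ^ ((d - 1) * N) ∣ 1 := by
    rwa [← mul_dvd_mul_iff_right hstep, one_mul]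
  exact (isUnit_pow_iff (mul_pos (by omega) hN).ne').1 (isUnit_of_dvd_one hpow)

theorem map_zero_dvd_natCast_of_iterate_pow_eq [IsDomain R] (hd : 2 ≤ d) (h0 : F 0 ≠ 0) {j : ℕ}
    (hne : F^[j + 2] 0 ≠ F^[j + 1] 0) (hpow : F^[j + 2] 0 ^ d = F^[j + 1] 0 ^ d) :
    F 0 ∣ (d : R) :=
  dvd_of_pow_dvd_mul_pow_pred h0 hd (map_zero_pow_dvd_iterate_sub_map_zero hF j)
    ((map_zero_pow_dvd_iterate_sub_iterate hF j).trans (sub_dvd_natCast_mul_pow_pred hne hpow))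

end Iterate

/-! ### The critical orbit of `x ^ d + c` -/

/-- The unicritical map `f_{c,d} : x ↦ x ^ d + c`, over an arbitrary ring; `critPoly d n` is the
value at `0` of its `n`-th iterate for the generic parameter `c`. -/
def unicritical {R : Type*} [CommRing R] (d : ℕ) (c x : R) : R := x ^ d + c

/-- The parameter `c` is postcritically finite: the critical point `0` of `x ^ d + c` is
preperiodic, with the periodic case allowed. -/
def IsPostcriticallyFinite {R : Type*} [CommRing R] (d : ℕ) (c : R) : Prop :=
  ∃ m, (unicritical d c)^[m] 0 ∈ Function.periodicPts (unicritical d c)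

section Unicritical

open Function

variable {R : Type*} [CommRing R] {d : ℕ} {c : R}

theorem sub_dvd_unicritical_sub (x y : R) : x - y ∣ unicritical d c x - unicritical d c y := by
  rw [unicritical, unicritical, add_sub_add_right_eq_sub]
  exact sub_dvd_pow_sub_pow x y d

theorem pow_sub_pow_dvd_unicritical_iterate_sub {n : ℕ} (hn : n ≠ 0) (x y : R) :
    x ^ d - y ^ d ∣ (unicritical d c)^[n] x - (unicritical d c)^[n] y := by
  obtain ⟨n, rfl⟩ := Nat.exists_eq_succ_of_ne_zero hn
  rw [iterate_succ_apply, iterate_succ_apply, ← add_sub_add_right_eq_sub (x ^ d) (y ^ d) c]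
  exact sub_dvd_iterate_sub sub_dvd_unicritical_sub n _ _

theorem semiconj_unicritical {S : Type*} [CommRing S] (φ : R →+* S) (d : ℕ) (c : R) :
    Semiconj φ (unicritical d c) (unicritical d (φ c)) := fun x => by
  simp only [unicritical, map_add, map_pow]

theorem map_unicritical_iterate_zero {S : Type*} [CommRing S] (φ : R →+* S) (d : ℕ) (c : R)
    (n : ℕ) : φ ((unicritical d c)^[n] 0) = (unicritical d (φ c))^[n] 0 := by
  rw [((semiconj_unicritical φ d c).iterate_right n).eq, map_zero]

theorem aeval_critPoly (d : ℕ) (c : R) (n : ℕ) :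
    aeval c (critPoly d n) = (unicritical d c)^[n] 0 := by
  induction n with
  | zero => simp [critPoly]
  | succ n ih => rw [iterate_succ_apply', ← ih, critPoly, map_add, map_pow, aeval_X, unicritical]

theorem IsPostcriticallyFinite.of_map {S : Type*} [CommRing S] {φ : R →+* S}
    (hφ : Injective φ) (h : IsPostcriticallyFinite d (φ c)) : IsPostcriticallyFinite d c := by
  obtain ⟨m, n, hn, hmn⟩ := h
  refine ⟨m, n, hn, hφ ?_⟩
  rw [← iterate_add_apply, map_unicritical_iterate_zero, map_unicritical_iterate_zero,
    iterate_add_apply]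
  exact hmn

theorem unicritical_iterate_zero_gcd_mem {I : Ideal R} {i j : ℕ}
    (hi : (unicritical d c)^[i] 0 ∈ I) (hj : (unicritical d c)^[j] 0 ∈ I) :
    (unicritical d c)^[i.gcd j] 0 ∈ I := by
  rw [← Ideal.Quotient.eq_zero_iff_mem, map_unicritical_iterate_zero] at *
  exact IsPeriodicPt.gcd hi hj

theorem isUnit_unicritical_iterate_zero [IsDomain R] (hd : 2 ≤ d) {m g : ℕ}
    (hper : (unicritical d c)^[m] 0 ∈ periodicPts (unicritical d c))
    (hg : ¬ minimalPeriod (unicritical d c) ((unicritical d c)^[m] 0) ∣ g) :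
    IsUnit ((unicritical d c)^[g] 0) := by
  have hg0 : g ≠ 0 := fun h => hg (h ▸ dvd_zero _)
  obtain ⟨k, hk⟩ := Nat.exists_eq_add_of_le' (Nat.le_mul_of_pos_left m hg0.bot_lt)
  have horbit :
      ((unicritical d c)^[g])^[m] 0 = (unicritical d c)^[k] ((unicritical d c)^[m] 0) := by
    rw [← iterate_mul, hk, iterate_add_apply]
  refine isUnit_map_zero_of_iterate_mem_periodicPts
    (pow_sub_pow_dvd_unicritical_iterate_sub hg0) hd (j := m) ?_ ?_
  · obtain ⟨n, hn, hmn⟩ := hper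
    rw [horbit]
    exact ⟨n, hn, (hmn.apply_iterate k).iterate g⟩
  · rw [horbit]
    intro hfix
    exact hg (minimalPeriod_apply_iterate hper k ▸ IsPeriodicPt.minimalPeriod_dvd hfix)

theorem isCoprime_unicritical_iterate_zero [IsDomain R] (hd : 2 ≤ d) {m l n : ℕ}
    (hper : (unicritical d c)^[m] 0 ∈ periodicPts (unicritical d c))
    (hl : ¬ minimalPeriod (unicritical d c) ((unicritical d c)^[m] 0) ∣ l) :
    IsCoprime ((unicritical d c)^[l] 0) ((unicritical d c)^[n] 0) := by
  rw [← Ideal.isCoprime_span_singleton_iff, Ideal.isCoprime_iff_sup_eq]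
  refine Ideal.eq_top_of_isUnit_mem _
    (unicritical_iterate_zero_gcd_mem (i := l) (j := n) ?_ ?_)
    (isUnit_unicritical_iterate_zero hd hper fun h => hl (h.trans (Nat.gcd_dvd_left l n)))
  · exact Ideal.mem_sup_left (Ideal.mem_span_singleton_self _)
  · exact Ideal.mem_sup_right (Ideal.mem_span_singleton_self _)

theorem unicritical_iterate_minimalPeriod_dvd_natCast [IsDomain R] (hd : 2 ≤ d) {l : ℕ}
    (hl : (unicritical d c)^[l] 0 ∉ periodicPts (unicritical d c))
    (hl' : (unicritical d c)^[l + 1] 0 ∈ periodicPts (unicritical d c)) :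
    (unicritical d c)^[minimalPeriod (unicritical d c) ((unicritical d c)^[l + 1] 0)] 0 ∣
      (d : R) := by
  set f := unicritical d c
  set n := minimalPeriod f (f^[l + 1] 0)
  have hn : 0 < n := minimalPeriod_pos_of_mem_periodicPts hl'
  have hzero : f^[n] 0 ≠ 0 := fun h => hl ⟨n, hn, IsPeriodicPt.apply_iterate h l⟩
  have hne : f^[l + n] 0 ≠ f^[l] 0 := fun h =>
    hl ⟨n, hn, by rwa [IsPeriodicPt, IsFixedPt, ← iterate_add_apply, add_comm]⟩
  have hpow : (f^[l + n] 0) ^ d = (f^[l] 0) ^ d := by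
    have h : f^[n] (f^[l + 1] 0) = f^[l + 1] 0 := isPeriodicPt_minimalPeriod _ _
    rw [← iterate_add_apply, ← add_assoc, add_comm n l, iterate_succ_apply',
      iterate_succ_apply'] at h
    exact add_right_cancel h
  by_cases hnl : n ∣ l
  · obtain ⟨q, hq⟩ := hnl
    rw [hq, ← mul_add_one, iterate_mul, iterate_mul] at hne hpow
    obtain _ | j := q
    · simp only [zero_add, iterate_zero, iterate_one, id] at hpow
      rw [zero_pow (by omega)] at hpow
      exact absurd (eq_zero_of_pow_eq_zero hpow) hzero
    · exact map_zero_dvd_natCast_of_iterate_pow_eq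
        (pow_sub_pow_dvd_unicritical_iterate_sub hn.ne') hd hzero hne hpow
  · have hcop : IsCoprime (f^[l] 0) (f^[n] 0) := isCoprime_unicritical_iterate_zero hd hl' hnl
    have hsub : f^[n] 0 ∣ f^[l + n] 0 - f^[l] 0 := by
      rw [iterate_add_apply]
      simpa only [sub_zero] using sub_dvd_iterate_sub sub_dvd_unicritical_sub l (f^[n] 0) 0
    exact hcop.symm.pow_right.dvd_of_dvd_mul_right
      (hsub.trans (sub_dvd_natCast_mul_pow_pred hne hpow))

end Unicritical

section Frobenius

open Function

variable {R : Type*} [CommRing R] {d : ℕ}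

theorem natCast_dvd_sub_pow_sub_pow_sub_pow (hd : d.Prime) (x y : R) :
    (d : R) ∣ (x - y) ^ d - (x ^ d - y ^ d) := by
  obtain ⟨r, hr⟩ := exists_add_pow_prime_eq hd (x - y) y
  rw [sub_add_cancel] at hr
  exact ⟨-((x - y) * y * r), by linear_combination -hr⟩

theorem natCast_dvd_sub_pow_sub_unicritical_iterate (hd : d.Prime) (c x y : R) (m : ℕ) :
    (d : R) ∣ (x - y) ^ d ^ m - ((unicritical d c)^[m] x - (unicritical d c)^[m] y) := by
  induction m with
  | zero => simp
  | succ m ih =>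
    rw [pow_succ, pow_mul, iterate_succ_apply', iterate_succ_apply', unicritical, unicritical,
      add_sub_add_right_eq_sub]
    simpa only [sub_add_sub_cancel] using dvd_add (ih.trans (sub_dvd_pow_sub_pow _ _ d))
      (natCast_dvd_sub_pow_sub_pow_sub_pow hd ((unicritical d c)^[m] x) ((unicritical d c)^[m] y))

theorem IsPostcriticallyFinite.exists_dvd_natCast [IsDomain R] [CharZero R] {c : R}
    (hc : IsPostcriticallyFinite d c) (hd : d.Prime) :
    ∃ (π : R) (k E : ℕ), π ≠ 0 ∧ k ≠ 0 ∧ π ∣ (d : R) ∧ π ∣ (unicritical d c)^[k] 0 ∧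
      (d : R) ∣ π ^ E := by
  classical
  set f := unicritical d c
  have hper := Nat.find_spec hc
  rcases hm : Nat.find hc with _ | l
  · rw [hm] at hper
    obtain ⟨k, hk, hk0⟩ := hper
    refine ⟨d, k, 1, Nat.cast_ne_zero.2 hd.ne_zero, hk.ne', dvd_rfl, ?_, by rw [pow_one]⟩
    rw [show f^[k] 0 = 0 from hk0]
    exact dvd_zero _
  · have hl : f^[l] 0 ∉ periodicPts f := Nat.find_min hc (by omega)
    rw [hm] at hper
    set n := minimalPeriod f (f^[l + 1] 0)
    have hn : 0 < n := minimalPeriod_pos_of_mem_periodicPts hper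
    have hreturn : f^[l + 1] (f^[n] 0) = f^[l + 1] 0 := by
      rw [← iterate_add_apply, add_comm, iterate_add_apply]
      exact isPeriodicPt_minimalPeriod _ _
    have hpow := natCast_dvd_sub_pow_sub_unicritical_iterate hd c (f^[n] 0) 0 (l + 1)
    rw [hreturn, sub_self, sub_zero, sub_zero] at hpow
    exact ⟨f^[n] 0, n, d ^ (l + 1), fun h => hl ⟨n, hn, IsPeriodicPt.apply_iterate h l⟩, hn.ne',
      unicritical_iterate_minimalPeriod_dvd_natCast hd.two_le hl hper, dvd_rfl, hpow⟩

end Frobenius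

/-! ### Radical principal ideals -/

section Radical

theorem isRadical_of_squarefree_mem {R : Type*} [CommRing R] [IsDomain R]
    [IsPrincipalIdealRing R] {I : Ideal R} {x : R} (hx : Squarefree x) (hxI : x ∈ I) :
    I.IsRadical := by
  obtain ⟨g, rfl⟩ := (IsPrincipalIdealRing.principal I).principal
  rw [Ideal.submodule_span_eq, Ideal.mem_span_singleton] at hxI
  rw [Ideal.submodule_span_eq, ← isRadical_iff_span_singleton]
  exact (hx.squarefree_of_dvd hxI).isRadical

theorem isRadical_of_squarefree_map_intCast {p : ℕ} [Fact p.Prime] {I : Ideal ℤ[X]} {P : ℤ[X]}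
    (hp : C (p : ℤ) ∈ I) (hP : P ∈ I) (hsq : Squarefree (P.map (Int.castRingHom (ZMod p)))) :
    I.IsRadical := by
  let φ : ℤ[X] →+* (ZMod p)[X] := mapRingHom (Int.castRingHom (ZMod p))
  have hφ : Function.Surjective φ := map_surjective _ ZMod.intCast_surjective
  have hker : RingHom.ker φ ≤ I := by
    rw [ker_mapRingHom, ZMod.ker_intCastRingHom, Ideal.map_span, Set.image_singleton,
      Ideal.span_singleton_le_iff_mem]
    exact hp
  have hI : (I.map φ).comap φ = I := by
    rw [Ideal.comap_map_of_surjective' φ hφ, sup_eq_left.2 hker]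
  rw [← hI]
  exact (isRadical_of_squarefree_mem hsq (Ideal.mem_map_of_mem φ hP)).comap φ

theorem separable_map_critPoly_s7 (d : ℕ) {n : ℕ} (hn : n ≠ 0) :
    ((critPoly d n).map (Int.castRingHom (ZMod d))).Separable := by
  obtain ⟨n, rfl⟩ := Nat.exists_eq_succ_of_ne_zero hn
  have hderiv : derivative ((critPoly d (n + 1)).map (Int.castRingHom (ZMod d))) = 1 := by
    simp [critPoly, derivative_pow]
  rw [Polynomial.Separable, hderiv]
  exact isCoprime_one_right

theorem isRadical_of_dvd_unicritical_iterate_zero {R : Type*} [CommRing R] {p : ℕ} (hp : p.Prime)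
    {c : R} (hc : Function.Surjective (aeval c : ℤ[X] →ₐ[ℤ] R)) {π : R} {n : ℕ} (hn : n ≠ 0)
    (hπp : π ∣ (p : R)) (hπn : π ∣ (unicritical p c)^[n] 0) : IsRadical π := by
  have : Fact p.Prime := ⟨hp⟩
  have hcomap : ((Ideal.span {π}).comap (aeval c : ℤ[X] →ₐ[ℤ] R)).IsRadical := by
    refine isRadical_of_squarefree_map_intCast (P := critPoly p n) ?_ ?_
      (separable_map_critPoly_s7 p hn).squarefree
    · rw [Ideal.mem_comap, aeval_C, Ideal.mem_span_singleton]
      simpa using hπp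
    · rwa [Ideal.mem_comap, aeval_critPoly, Ideal.mem_span_singleton]
  rw [isRadical_iff_span_singleton]
  intro x hx
  obtain ⟨P, rfl⟩ := hc x
  obtain ⟨N, hN⟩ := hx
  exact hcomap ⟨N, by rwa [Ideal.mem_comap, map_pow]⟩

end Radical

/-! ### Saturation and the index -/

section Saturation

theorem mem_range_algebraMap_of_isRadical_mul_mem {R B : Type*} [CommRing R] [CommRing B]
    [IsDomain B] [Algebra R B] [FaithfulSMul R B] {π : R} (hrad : IsRadical π) (hπ : π ≠ 0) {b : B}
    (hb : IsIntegral R b) (h : algebraMap R B π * b ∈ (algebraMap R B).range) :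
    b ∈ (algebraMap R B).range := by
  have hinj := FaithfulSMul.algebraMap_injective R B
  obtain ⟨z, hz⟩ := h
  obtain ⟨q, hq, hqb⟩ := hb
  obtain ⟨y, rfl⟩ := hrad _ _ (dvd_pow_natDegree_of_eval₂_eq_zero hinj hq π z b hqb hz.symm)
  refine ⟨y, mul_left_cancel₀ ((map_ne_zero_iff _ hinj).2 hπ) ?_⟩
  rw [← map_mul, hz]

theorem mem_range_algebraMap_of_dvd_isRadical_pow {R B : Type*} [CommRing R] [CommRing B]
    [IsDomain B] [Algebra R B] [FaithfulSMul R B] {a π : R} (hrad : IsRadical π) (hπ : π ≠ 0)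
    {E : ℕ} (ha : a ∣ π ^ E) {b : B} (hb : IsIntegral R b)
    (h : algebraMap R B a * b ∈ (algebraMap R B).range) : b ∈ (algebraMap R B).range := by
  have hpow : ∀ E : ℕ, algebraMap R B π ^ E * b ∈ (algebraMap R B).range →
      b ∈ (algebraMap R B).range := by
    intro E
    induction E with
    | zero => simp
    | succ E ih =>
      intro hE
      rw [pow_succ', mul_assoc] at hE
      refine ih (mem_range_algebraMap_of_isRadical_mul_mem hrad hπ ?_ hE)
      exact ((isIntegral_algebraMap (x := π)).pow E).mul hb
  obtain ⟨t, ht⟩ := ha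
  refine hpow E ?_
  rw [← map_pow, ht, map_mul, mul_right_comm]
  exact mul_mem h ⟨t, rfl⟩

theorem not_dvd_index_of_nsmul_mem {A : Type*} [AddCommGroup A] {H : AddSubgroup A}
    [H.FiniteIndex] {p : ℕ} (hp : p.Prime) (h : ∀ x, p • x ∈ H → x ∈ H) : ¬ p ∣ H.index := by
  intro hdvd
  have : Fact p.Prime := ⟨hp⟩
  obtain ⟨x, hx⟩ := exists_prime_addOrderOf_dvd_card' (G := A ⧸ H) p hdvd
  obtain ⟨a, rfl⟩ := QuotientAddGroup.mk_surjective x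
  have hpa : p • (a : A ⧸ H) = 0 := hx ▸ addOrderOf_nsmul_eq_zero _
  rw [← QuotientAddGroup.mk_nsmul, QuotientAddGroup.eq_zero_iff] at hpa
  rw [(QuotientAddGroup.eq_zero_iff a).2 (h a hpa), addOrderOf_zero] at hx
  exact hp.one_lt.ne hx

theorem finiteIndex_of_forall_exists_zsmul_mem {A : Type*} [AddCommGroup A] [Module.Finite ℤ A]
    {H : AddSubgroup A} (h : ∀ x, ∃ k : ℤ, k ≠ 0 ∧ k • x ∈ H) : H.FiniteIndex := by
  have : Module.Finite ℤ (A ⧸ H) :=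
    Module.Finite.of_surjective (QuotientAddGroup.mk' H).toIntLinearMap
      (QuotientAddGroup.mk'_surjective H)
  have : Finite (A ⧸ H) := by
    refine Module.finite_of_fg_torsion _ fun x => ?_
    obtain ⟨a, rfl⟩ := QuotientAddGroup.mk_surjective x
    obtain ⟨k, hk, hka⟩ := h a
    refine ⟨⟨k, mem_nonZeroDivisors_of_ne_zero hk⟩, ?_⟩
    rw [Submonoid.mk_smul, ← QuotientAddGroup.mk_zsmul]
    exact (QuotientAddGroup.eq_zero_iff _).2 hka
  exact AddSubgroup.finiteIndex_of_finite_quotient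

open nonZeroDivisors in
theorem finiteIndex_adjoin_int {B K : Type*} [CommRing B] [Module.Finite ℤ B] [CommRing K]
    [Algebra ℚ K] [Algebra B K] [FaithfulSMul B K] {s : Set B}
    (hs : Algebra.adjoin ℚ (algebraMap B K '' s) = ⊤) :
    (Algebra.adjoin ℤ s).toSubring.toAddSubgroup.FiniteIndex := by
  refine finiteIndex_of_forall_exists_zsmul_mem fun x => ?_
  obtain ⟨⟨k, hk⟩, hkx⟩ := multiple_mem_adjoin_of_mem_localization_adjoin ℤ⁰ ℚ
    (algebraMap B K '' s) (algebraMap B K x) (hs ▸ Algebra.mem_top)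
  refine ⟨k, nonZeroDivisors.ne_zero hk, ?_⟩
  have hmap : (Algebra.adjoin ℤ s).map (IsScalarTower.toAlgHom ℤ B K) =
      Algebra.adjoin ℤ (algebraMap B K '' s) := AlgHom.map_adjoin _ s
  rw [← hmap] at hkx
  obtain ⟨y, hy, hyx⟩ := hkx
  have hyx' : y = k • x := FaithfulSMul.algebraMap_injective B K (by
    rw [map_zsmul]; exact hyx)
  exact hyx' ▸ hy

end Saturation

/-! ### Roots of Misiurewicz polynomials -/

section Misiurewicz

variable {A : Type*} [CommRing A] [IsDomain A]

/-- The rational functions with neither a zero nor a pole at `c`, as a submonoid of the field of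
rational functions: fractions `p / q` of integer polynomials not vanishing at `c`. -/
def regularUnits (c : A) : Submonoid RF where
  carrier := {r | ∃ p q : ℤ[X], aeval c p ≠ 0 ∧ aeval c q ≠ 0 ∧ r = toRF p / toRF q}
  one_mem' := ⟨1, 1, by simp, by simp, by simp [toRF]⟩
  mul_mem' := by
    rintro _ _ ⟨p, q, hp, hq, rfl⟩ ⟨p', q', hp', hq', rfl⟩
    refine ⟨p * p', q * q', ?_, ?_, ?_⟩
    · rw [map_mul]; exact mul_ne_zero hp hp'
    · rw [map_mul]; exact mul_ne_zero hq hq'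
    · simp only [toRF, map_mul, div_mul_div_comm]

variable {c : A}

theorem toRF_mem_regularUnits_iff {p : ℤ[X]} : toRF p ∈ regularUnits c ↔ aeval c p ≠ 0 := by
  refine ⟨?_, fun hp => ⟨p, 1, hp, by simp, by simp [toRF]⟩⟩
  rintro ⟨p', q, hp', hq, h⟩ hp
  have hq0 : toRF q ≠ 0 := by
    rw [toRF, map_ne_zero_iff _ (IsFractionRing.injective ℤ[X] RF)]
    rintro rfl
    exact hq (map_zero _)
  rw [eq_div_iff hq0, toRF, toRF, ← map_mul] at h
  apply hp'
  rw [← IsFractionRing.injective ℤ[X] RF h, map_mul, hp, zero_mul]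

theorem inv_mem_regularUnits {r : RF} (hr : r ∈ regularUnits c) : r⁻¹ ∈ regularUnits c := by
  obtain ⟨p, q, hp, hq, rfl⟩ := hr
  exact ⟨q, p, hq, hp, inv_div _ _⟩

theorem div_mem_regularUnits {r s : RF} (hr : r ∈ regularUnits c) (hs : s ∈ regularUnits c) :
    r / s ∈ regularUnits c :=
  div_eq_mul_inv r s ▸ mul_mem hr (inv_mem_regularUnits hs)

theorem zpow_mem_regularUnits {r : RF} (hr : r ∈ regularUnits c) (k : ℤ) :
    r ^ k ∈ regularUnits c := by
  obtain ⟨k, rfl | rfl⟩ := k.eq_nat_or_neg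
  · exact zpow_natCast r k ▸ pow_mem hr k
  · rw [zpow_neg, zpow_natCast]
    exact inv_mem_regularUnits (pow_mem hr k)

theorem FRat_mem_regularUnits {d : ℕ} (hc : ¬ IsPostcriticallyFinite d c) (m n : ℕ) :
    FRat d m n ∈ regularUnits c := by
  have hsub : ∀ i k, 0 < k →
      toRF (critPoly d (i + k)) - toRF (critPoly d i) ∈ regularUnits c := by
    intro i k hk
    rw [toRF, toRF, ← map_sub, ← toRF, toRF_mem_regularUnits_iff, map_sub, aeval_critPoly,
      aeval_critPoly, sub_ne_zero, add_comm, Function.iterate_add_apply]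
    exact fun h => hc ⟨i, k, hk, h⟩
  refine prod_mem fun k hk => ?_
  have hk0 : 0 < k := Nat.pos_of_mem_divisors hk
  exact zpow_mem_regularUnits (div_mem_regularUnits (hsub m k hk0) (hsub (m - 1) k hk0)) _

theorem IsMisiurewicz.isPostcriticallyFinite {d m n : ℕ} {G : ℤ[X]} (hG : IsMisiurewicz d m n G)
    (hroot : aeval c G = 0) : IsPostcriticallyFinite d c := by
  by_contra hc
  have hmem : GRat d m n ∈ regularUnits c := by
    rw [GRat]
    split_ifs
    · exact div_mem_regularUnits (FRat_mem_regularUnits hc m n) (FRat_mem_regularUnits hc 1 n)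
    · exact FRat_mem_regularUnits hc m n
  rw [← hG, toRF_mem_regularUnits_iff] at hmem
  exact hmem hroot

end Misiurewicz

theorem prime_not_dvd_index_general {B : Type*} [CommRing B] [IsDomain B] [CharZero B]
    [Algebra.IsIntegral ℤ B] {d : ℕ} (hd : d.Prime) {c : B} (hc : IsPostcriticallyFinite d c)
    [(Algebra.adjoin ℤ {c}).toSubring.toAddSubgroup.FiniteIndex] :
    ¬ d ∣ (Algebra.adjoin ℤ {c}).toSubring.toAddSubgroup.index := by
  let R := Algebra.adjoin ℤ {c}
  let γ : R := ⟨c, Algebra.self_mem_adjoin_singleton ℤ c⟩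
  have hγ : IsPostcriticallyFinite d γ := .of_map (φ := algebraMap R B) Subtype.val_injective hc
  have hsurj : Function.Surjective (aeval γ : ℤ[X] →ₐ[ℤ] R) := by
    rintro ⟨x, hx⟩
    obtain ⟨P, hP⟩ : x ∈ (aeval c : ℤ[X] →ₐ[ℤ] B).range :=
      Algebra.adjoin_singleton_eq_range_aeval ℤ c ▸ hx
    exact ⟨P, Subtype.ext ((aeval_algebraMap_apply B γ P).symm.trans hP)⟩
  obtain ⟨π, k, E, hπ, hk, hπd, hπk, hdπ⟩ := hγ.exists_dvd_natCast hd
  have hrad : IsRadical π := isRadical_of_dvd_unicritical_iterate_zero hd hsurj hk hπd hπk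
  refine not_dvd_index_of_nsmul_mem hd fun x hx => ?_
  have hint : IsIntegral R x := (Algebra.IsIntegral.isIntegral (R := ℤ) x).tower_top
  have hmem := mem_range_algebraMap_of_dvd_isRadical_pow hrad hπ hdπ hint
  rw [Subalgebra.range_algebraMap, map_natCast, ← nsmul_eq_mul] at hmem
  exact hmem hx

/-- Let `d` be a prime, `m ≥ 2`, `n ≥ 1`, and `c₀` a root of `G_{d,m,n}`,
with `K = ℚ(c₀)`. Then `d` does not divide the index `[O_K : ℤ[c₀]]`. -/
theorem prime_not_dvd_index (d m n : ℕ) (hd : d.Prime) (hm : 2 ≤ m) (hn : 1 ≤ n)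
    (G : Polynomial ℤ) (hG : IsMisiurewicz d m n G)
    (K : Type*) [Field K] [NumberField K] (c₀ : NumberField.RingOfIntegers K)
    (hroot : Polynomial.aeval (c₀ : K) G = 0)
    (hgen : Algebra.adjoin ℚ {(c₀ : K)} = ⊤) :
    ¬ d ∣ (Algebra.adjoin ℤ {c₀}).toSubring.toAddSubgroup.index := by
  have := finiteIndex_adjoin_int (s := {c₀}) (Set.image_singleton ▸ hgen)
  exact prime_not_dvd_index_general hd
    (hG.isPostcriticallyFinite ((aeval_algebraMap_eq_zero_iff K c₀ G).1 hroot))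
end
end

section
/- Let d be a rational prime and let c ∈ ℚ̄ be such that f_{c,d}(x) = x^d + c has exact type (m, n) with m ≠ 0. Set K = ℚ(c) and a_i = f_{c,d}^i(0) ∈ O_K for 1 ≤ i ≤ m+n−1. If n divides i, then the principal ideal (a_i) of O_K satisfies (a_i)^{M_{m,n}} = (d), where M_{m,n} = d^{m−1}(d−1) if n ∤ m−1 and M_{m,n} = (d^{m−1}−1)(d−1) if n | m−1. -/
open Polynomial

noncomputable section

/-- `f_{c,d}(x) = x^d + c` has exact type `(m, n)`: `n` is the minimal positive integer with
`f_{c,d}^{m+n}(0) = f_{c,d}^m(0)`, and `f_{c,d}^{k+n}(0) ≠ f_{c,d}^k(0)` for every `k < m`. -/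
def HasExactType {K : Type*} [CommRing K] (d : ℕ) (c : K) (m n : ℕ) : Prop :=
  0 < n ∧
  (fun x => x ^ d + c)^[m + n] 0 = (fun x => x ^ d + c)^[m] 0 ∧
  (∀ j, 0 < j → j < n → (fun x => x ^ d + c)^[m + j] 0 ≠ (fun x => x ^ d + c)^[m] 0) ∧
  (∀ k, k < m → (fun x => x ^ d + c)^[k + n] 0 ≠ (fun x => x ^ d + c)^[k] 0)

/-!
Let `v` be a valuation with `v c ≤ 1`, and write the type as `(m + 1, n)`. Minimality of the
preperiod gives `a_{m+n} = ζ a_m` with `ζ` a primitive `d`-th root of unity, so for `n ∣ i`, `i ≠ 0`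
we have `v (a_{m+i} - a_m) = v (1 - ζ) v (a_m)`. On the other hand
`a_{k+1+i} - a_{k+1} = a_{k+i} ^ d - a_k ^ d` is the product of the `a_{k+i} - ξ a_k` over the
`d`-th roots of unity `ξ`. For `k < m` the difference `a_{k+i} - a_k` is `v`-adically larger than
`(1 - ζ) a_k`, so all these factors have the same valuation, and hence
`v (a_{m+i} - a_m) = v (a_i) ^ d ^ m`. Comparing, and using that `v (a_m)` is `v (a_i)` or `1`
according to whether `n ∣ m`, expresses `v (1 - ζ)` as a power of `v (a_i)`; finally
`v d = v (1 - ζ) ^ (d - 1)`. If `v (1 - ζ) = 1`, both sides are `1`.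

An integrally closed domain is the intersection of the valuation rings of its fraction field that
contain it, so elements with the same value under all these valuations generate the same ideal.
-/

section PowSubPow

variable {R Γ₀ : Type*} [CommRing R] [LinearOrderedCommGroupWithZero Γ₀] (v : Valuation R Γ₀)
  {d : ℕ} {x y ζ ξ : R}

lemma valuation_pow_sub_pow_le (hx : v x ≤ 1) (hy : v y ≤ 1) (d : ℕ) :
    v (x ^ d - y ^ d) ≤ v (x - y) := by
  rw [← geom_sum₂_mul, v.map_mul]
  refine mul_le_of_le_one_left' (v.map_sum_le fun i _ ↦ ?_)
  rw [v.map_mul, v.map_pow, v.map_pow]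
  exact mul_le_one' (pow_le_one' hx i) (pow_le_one' hy _)

lemma valuation_eq_one_of_pow_eq_one (hd : d ≠ 0) (hζ : ζ ^ d = 1) : v ζ = 1 := by
  rw [← pow_eq_one_iff_of_nonneg zero_le hd, ← v.map_pow, hζ, v.map_one]

variable [IsDomain R]

lemma valuation_one_sub_le_of_pow_eq_one [NeZero d] (hζ : IsPrimitiveRoot ζ d) (hξ : ξ ^ d = 1) :
    v (1 - ξ) ≤ v (1 - ζ) := by
  obtain ⟨i, -, rfl⟩ := hζ.eq_pow_of_pow_eq_one hξ
  have hvζ : v ζ = 1 := valuation_eq_one_of_pow_eq_one v (NeZero.ne d) hζ.pow_eq_one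
  simpa only [one_pow] using valuation_pow_sub_pow_le v v.map_one.le hvζ.le i

lemma valuation_one_sub_eq_of_isPrimitiveRoot [NeZero d] (hζ : IsPrimitiveRoot ζ d)
    (hξ : IsPrimitiveRoot ξ d) : v (1 - ξ) = v (1 - ζ) :=
  le_antisymm (valuation_one_sub_le_of_pow_eq_one v hζ hξ.pow_eq_one)
    (valuation_one_sub_le_of_pow_eq_one v hξ hζ.pow_eq_one)

lemma valuation_natCast_prime (hd : d.Prime) (hζ : IsPrimitiveRoot ζ d) :
    v d = v (1 - ζ) ^ (d - 1) := by
  have : NeZero d := ⟨hd.ne_zero⟩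
  obtain ⟨e, rfl⟩ := Nat.exists_eq_add_one.2 hd.pos
  rw [Nat.cast_succ, ← hζ.prod_one_sub_pow_eq_order, map_prod, Finset.prod_eq_pow_card,
    Finset.card_range, Nat.add_sub_cancel]
  intro k hk
  have hcop : (k + 1).Coprime (e + 1) :=
    (Nat.coprime_of_lt_prime k.succ_ne_zero (by simpa using hk) hd).symm
  exact valuation_one_sub_eq_of_isPrimitiveRoot v hζ (hζ.pow_of_coprime _ hcop)

lemma valuation_sub_mul_sub_sub_le [NeZero d] (hζ : IsPrimitiveRoot ζ d)
    (hξ : ξ ∈ nthRootsFinset d (1 : R)) :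
    v ((x - ξ * y) - (x - y)) ≤ v (1 - ζ) * v y := by
  rw [show (x - ξ * y) - (x - y) = (1 - ξ) * y by ring, v.map_mul]
  have hξ' : ξ ^ d = 1 := (mem_nthRootsFinset (NeZero.pos d) 1).1 hξ
  gcongr
  exact valuation_one_sub_le_of_pow_eq_one v hζ hξ'

lemma valuation_pow_sub_pow_eq [NeZero d] (hζ : IsPrimitiveRoot ζ d)
    (h : v (1 - ζ) * v y < v (x - y)) : v (x ^ d - y ^ d) = v (x - y) ^ d := by
  rw [hζ.pow_sub_pow_eq_prod_sub_mul x y (NeZero.pos d), map_prod, Finset.prod_eq_pow_card,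
    hζ.card_nthRootsFinset]
  exact fun ξ hξ ↦ v.map_eq_of_sub_lt ((valuation_sub_mul_sub_sub_le v hζ hξ).trans_lt h)

lemma valuation_pow_sub_pow_le_pow [NeZero d] (hζ : IsPrimitiveRoot ζ d)
    (h : v (x - y) ≤ v (1 - ζ) * v y) : v (x ^ d - y ^ d) ≤ (v (1 - ζ) * v y) ^ d := by
  rw [hζ.pow_sub_pow_eq_prod_sub_mul x y (NeZero.pos d), map_prod]
  refine (Finset.prod_le_pow_card _ _ (v (1 - ζ) * v y) fun ξ hξ ↦ ?_).trans_eq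
    (by rw [hζ.card_nthRootsFinset])
  rw [← sub_add_cancel (x - ξ * y) (x - y)]
  exact v.map_add_le (valuation_sub_mul_sub_sub_le v hζ hξ) h

lemma valuation_pow_sub_pow_lt (hd : 1 < d) (hζ : IsPrimitiveRoot ζ d) (hζ1 : v (1 - ζ) < 1)
    (hy : v y ≤ 1) (hlt : v (x - y) < 1) (hne : v (x - y) ≠ 0) :
    v (x ^ d - y ^ d) < v (x - y) := by
  classical
  have : NeZero d := ⟨by lia⟩
  have hone : (1 : R) ∈ nthRootsFinset d (1 : R) := by simp [mem_nthRootsFinset (NeZero.pos d)]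
  rw [hζ.pow_sub_pow_eq_prod_sub_mul x y (NeZero.pos d), ← Finset.mul_prod_erase _ _ hone,
    one_mul, v.map_mul, map_prod]
  refine mul_lt_of_lt_one_right (zero_lt_iff.2 hne) ?_
  have hcard : ((nthRootsFinset d (1 : R)).erase 1).card ≠ 0 := by
    rw [Finset.card_erase_of_mem hone, hζ.card_nthRootsFinset]
    lia
  refine (Finset.prod_le_pow_card _ _ (max (v (1 - ζ)) (v (x - y))) fun ξ hξ ↦ ?_).trans_lt
    (pow_lt_one₀ zero_le (max_lt hζ1 hlt) hcard)
  rw [← sub_add_cancel (x - ξ * y) (x - y)]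
  exact (v.map_add _ _).trans (max_le_max_right _ ((valuation_sub_mul_sub_sub_le v hζ
    (Finset.mem_of_mem_erase hξ)).trans (mul_le_of_le_one_right' hy)))

lemma valuation_sub_lt_one_of_pow_sub_pow [NeZero d] (hζ : IsPrimitiveRoot ζ d)
    (hζ1 : v (1 - ζ) < 1) (hy : v y ≤ 1) (h : v (x ^ d - y ^ d) < 1) : v (x - y) < 1 := by
  by_contra! hge
  rw [valuation_pow_sub_pow_eq v hζ ((mul_le_of_le_one_right' hy).trans_lt (hζ1.trans_le hge))] at h
  exact h.not_ge (one_le_pow₀ hge)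

end PowSubPow

section CriticalOrbit

variable {R S : Type*} [CommRing R] [CommRing S] {d m n k s : ℕ} {c : R}

/-- The critical orbit `a_k = f_{c,d}^k(0)` of the unicritical polynomial `f_{c,d}(x) = x ^ d + c`,
indexed from `a_0 = 0`. -/
def criticalOrbit (d : ℕ) (c : R) (k : ℕ) : R :=
  (fun x => x ^ d + c)^[k] 0

@[simp]
lemma criticalOrbit_zero : criticalOrbit d c 0 = 0 := rfl

lemma criticalOrbit_succ (k : ℕ) : criticalOrbit d c (k + 1) = criticalOrbit d c k ^ d + c :=
  Function.iterate_succ_apply' ..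

lemma iterate_criticalOrbit (s k : ℕ) :
    (fun x => x ^ d + c)^[s] (criticalOrbit d c k) = criticalOrbit d c (k + s) := by
  rw [criticalOrbit, ← Function.iterate_add_apply, add_comm s k, criticalOrbit]

lemma map_criticalOrbit (φ : R →+* S) (k : ℕ) :
    φ (criticalOrbit d c k) = criticalOrbit d (φ c) k := by
  induction k with
  | zero => simp
  | succ k ih => simp [criticalOrbit_succ, ih]

lemma criticalOrbit_succ_add_sub_succ (k s : ℕ) :
    criticalOrbit d c (k + 1 + s) - criticalOrbit d c (k + 1) =
      criticalOrbit d c (k + s) ^ d - criticalOrbit d c k ^ d := by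
  rw [add_right_comm, criticalOrbit_succ, criticalOrbit_succ]
  ring

lemma hasExactType_map_iff {φ : R →+* S} (hφ : Function.Injective φ) :
    HasExactType d (φ c) m n ↔ HasExactType d c m n := by
  have hmap (k : ℕ) : (fun x => x ^ d + φ c)^[k] 0 = φ ((fun x => x ^ d + c)^[k] 0) :=
    (map_criticalOrbit φ k).symm
  simp only [HasExactType, hmap, hφ.eq_iff, ne_eq]

namespace HasExactType

lemma minimalPeriod_criticalOrbit (h : HasExactType d c m n) :
    Function.minimalPeriod (fun x => x ^ d + c) (criticalOrbit d c m) = n := by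
  obtain ⟨hn, hper, hmin, -⟩ := h
  have hpt : Function.IsPeriodicPt (fun x => x ^ d + c) n (criticalOrbit d c m) :=
    (iterate_criticalOrbit n m).trans hper
  refine (hpt.minimalPeriod_le hn).antisymm (not_lt.1 fun hlt ↦ ?_)
  refine hmin _ (hpt.minimalPeriod_pos hn) hlt ?_
  exact (iterate_criticalOrbit _ m).symm.trans Function.iterate_minimalPeriod

lemma criticalOrbit_mem_periodicPts (h : HasExactType d c m n) :
    criticalOrbit d c m ∈ Function.periodicPts (fun x => x ^ d + c) :=
  Function.minimalPeriod_pos_iff_mem_periodicPts.1 (h.minimalPeriod_criticalOrbit ▸ h.1)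

lemma criticalOrbit_add_eq_iff (h : HasExactType d c m n) (hk : m ≤ k) :
    criticalOrbit d c (k + s) = criticalOrbit d c k ↔ n ∣ s := by
  obtain ⟨j, rfl⟩ := Nat.exists_eq_add_of_le hk
  rw [← h.minimalPeriod_criticalOrbit,
    ← Function.minimalPeriod_apply_iterate h.criticalOrbit_mem_periodicPts j,
    ← Function.isPeriodicPt_iff_minimalPeriod_dvd, iterate_criticalOrbit, Function.IsPeriodicPt,
    Function.IsFixedPt, iterate_criticalOrbit]

lemma criticalOrbit_ne_zero (h : HasExactType d c m n) (hm : m ≠ 0) (hs : s ≠ 0) :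
    criticalOrbit d c s ≠ 0 := by
  intro hzero
  have hper : (0 : R) ∈ Function.periodicPts (fun x => x ^ d + c) :=
    Function.mk_mem_periodicPts (Nat.pos_of_ne_zero hs) hzero
  apply h.2.2.2 0 (Nat.pos_of_ne_zero hm)
  rw [zero_add, Function.iterate_zero_apply, ← h.minimalPeriod_criticalOrbit, criticalOrbit,
    Function.minimalPeriod_apply_iterate hper, Function.iterate_minimalPeriod]

lemma ne_zero_of_succ [IsReduced R] (h : HasExactType d c (m + 1) n) (hd : d ≠ 0) : m ≠ 0 := by
  rintro rfl
  have hper : criticalOrbit d c (0 + 1 + n) - criticalOrbit d c (0 + 1) = 0 := sub_eq_zero.2 h.2.1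
  rw [criticalOrbit_succ_add_sub_succ, criticalOrbit_zero, zero_pow hd, sub_zero,
    zero_add, pow_eq_zero_iff hd] at hper
  exact h.criticalOrbit_ne_zero one_ne_zero h.1.ne' hper

lemma exists_isPrimitiveRoot {K : Type*} [Field K] {c : K} (h : HasExactType d c (m + 1) n)
    (hd : d.Prime) :
    ∃ ζ, IsPrimitiveRoot ζ d ∧ criticalOrbit d c (m + n) = ζ * criticalOrbit d c m := by
  have hne := h.criticalOrbit_ne_zero m.succ_ne_zero (h.ne_zero_of_succ hd.ne_zero)
  have hpow : criticalOrbit d c (m + n) ^ d = criticalOrbit d c m ^ d := by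
    rw [← sub_eq_zero, ← criticalOrbit_succ_add_sub_succ, sub_eq_zero]
    exact h.2.1
  refine ⟨criticalOrbit d c (m + n) / criticalOrbit d c m, ?_, (div_mul_cancel₀ _ hne).symm⟩
  have : Fact d.Prime := ⟨hd⟩
  refine IsPrimitiveRoot.iff_orderOf.2 (orderOf_eq_prime ?_ ?_)
  · rw [div_pow, hpow, div_self (pow_ne_zero d hne)]
  · rw [Ne, div_eq_one_iff_eq hne]
    exact h.2.2.2 m m.lt_succ_self

end HasExactType

end CriticalOrbit

section ValuationCriticalOrbit

variable {R Γ₀ : Type*} [CommRing R] [LinearOrderedCommGroupWithZero Γ₀] {v : Valuation R Γ₀}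
  {d i k s : ℕ} {c ζ : R}

lemma valuation_criticalOrbit_le_one (hc : v c ≤ 1) (k : ℕ) : v (criticalOrbit d c k) ≤ 1 := by
  induction k with
  | zero => simp
  | succ k ih =>
    rw [criticalOrbit_succ]
    exact v.map_add_le (by simpa only [v.map_pow] using pow_le_one' ih d) hc

lemma antitone_valuation_criticalOrbit_add_sub (hc : v c ≤ 1) (s : ℕ) :
    Antitone fun k ↦ v (criticalOrbit d c (k + s) - criticalOrbit d c k) := by
  refine antitone_nat_of_succ_le fun k ↦ ?_
  rw [criticalOrbit_succ_add_sub_succ]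
  exact valuation_pow_sub_pow_le v (valuation_criticalOrbit_le_one hc _)
    (valuation_criticalOrbit_le_one hc _) d

lemma valuation_criticalOrbit_add_sub_le (hc : v c ≤ 1) (k s : ℕ) :
    v (criticalOrbit d c (k + s) - criticalOrbit d c k) ≤ v (criticalOrbit d c s) := by
  simpa using antitone_valuation_criticalOrbit_add_sub (d := d) hc s k.zero_le

lemma valuation_criticalOrbit_one_add_sub (hd : d ≠ 0) (s : ℕ) :
    v (criticalOrbit d c (1 + s) - criticalOrbit d c 1) = v (criticalOrbit d c s) ^ d := by
  have h := criticalOrbit_succ_add_sub_succ (d := d) (c := c) 0 s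
  rw [zero_add, zero_add, criticalOrbit_zero, zero_pow hd, sub_zero] at h
  rw [h, v.map_pow]

lemma valuation_criticalOrbit_add_sub_le_pow (hc : v c ≤ 1) (hd : d ≠ 0) (hk : k ≠ 0) (s : ℕ) :
    v (criticalOrbit d c (k + s) - criticalOrbit d c k) ≤ v (criticalOrbit d c s) ^ d :=
  (antitone_valuation_criticalOrbit_add_sub hc s (Nat.one_le_iff_ne_zero.2 hk)).trans_eq
    (valuation_criticalOrbit_one_add_sub hd s)

lemma valuation_criticalOrbit_succ_mul (hc : v c ≤ 1) (hd : 1 < d)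
    (hne : v (criticalOrbit d c s) ≠ 0) (hlt : v (criticalOrbit d c s) < 1) (k : ℕ) :
    v (criticalOrbit d c ((k + 1) * s)) = v (criticalOrbit d c s) := by
  have hs : s ≠ 0 := by
    rintro rfl
    exact hne (by simp)
  induction k with
  | zero => simp
  | succ k ih =>
    refine v.map_eq_of_sub_lt ?_
    rw [show (k + 1 + 1) * s = s + (k + 1) * s by ring]
    calc _ ≤ v (criticalOrbit d c ((k + 1) * s)) ^ d :=
          valuation_criticalOrbit_add_sub_le_pow hc (by lia) hs _
      _ = v (criticalOrbit d c s) ^ d := by rw [ih]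
      _ < v (criticalOrbit d c s) := pow_lt_self_of_lt_one₀ (zero_lt_iff.2 hne) hlt hd

-- If `a_i` and `a_k` both have valuation `< 1`, then each has the valuation of `a_{ik}`.
lemma valuation_criticalOrbit_le (hc : v c ≤ 1) (hd : 1 < d) (hi : v (criticalOrbit d c i) ≠ 0)
    (hi1 : v (criticalOrbit d c i) < 1) (hk : v (criticalOrbit d c k) ≠ 0) :
    v (criticalOrbit d c i) ≤ v (criticalOrbit d c k) := by
  obtain hk1 | hk1 := le_or_gt 1 (v (criticalOrbit d c k))
  · exact hi1.le.trans hk1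
  have hne {j : ℕ} (hj : v (criticalOrbit d c j) ≠ 0) : j ≠ 0 := by
    rintro rfl
    exact hj (by simp)
  obtain ⟨i, rfl⟩ := Nat.exists_eq_succ_of_ne_zero (hne hi)
  obtain ⟨k, rfl⟩ := Nat.exists_eq_succ_of_ne_zero (hne hk)
  rw [← valuation_criticalOrbit_succ_mul hc hd hi hi1 k, mul_comm,
    valuation_criticalOrbit_succ_mul hc hd hk hk1 i]

lemma valuation_criticalOrbit_lt_one_of_add_sub [IsDomain R] [NeZero d] (hc : v c ≤ 1)
    (hζ : IsPrimitiveRoot ζ d) (hζ1 : v (1 - ζ) < 1)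
    (h : v (criticalOrbit d c (k + s) - criticalOrbit d c k) < 1) :
    v (criticalOrbit d c s) < 1 := by
  induction k with
  | zero => simpa using h
  | succ k ih =>
    rw [criticalOrbit_succ_add_sub_succ] at h
    exact ih (valuation_sub_lt_one_of_pow_sub_pow v hζ hζ1 (valuation_criticalOrbit_le_one hc k) h)

end ValuationCriticalOrbit

namespace HasExactType

variable {K Γ₀ : Type*} [Field K] [LinearOrderedCommGroupWithZero Γ₀] {v : Valuation K Γ₀}
  {d m n i k s : ℕ} {c ζ : K}

lemma valuation_criticalOrbit_ne_zero (h : HasExactType d c m n) (hm : m ≠ 0) (hs : s ≠ 0) :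
    v (criticalOrbit d c s) ≠ 0 :=
  v.ne_zero_iff.2 (h.criticalOrbit_ne_zero hm hs)

-- Modulo the maximal ideal, differences of the orbit shrink strictly until they vanish, so the
-- reduction is injective on the cycle.
lemma valuation_criticalOrbit_lt_one_iff (h : HasExactType d c m n) (hd : 1 < d) (hc : v c ≤ 1)
    (hζ : IsPrimitiveRoot ζ d) (hζ1 : v (1 - ζ) < 1) :
    v (criticalOrbit d c s) < 1 ↔ n ∣ s := by
  have : NeZero d := ⟨by lia⟩
  rw [← h.criticalOrbit_add_eq_iff le_rfl]
  refine ⟨fun hs ↦ ?_, fun heq ↦ ?_⟩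
  · by_contra hne
    have hstrict : v (criticalOrbit d c (m + 1 + s) - criticalOrbit d c (m + 1)) <
        v (criticalOrbit d c (m + s) - criticalOrbit d c m) := by
      rw [criticalOrbit_succ_add_sub_succ]
      exact valuation_pow_sub_pow_lt v hd hζ hζ1 (valuation_criticalOrbit_le_one hc m)
        ((valuation_criticalOrbit_add_sub_le hc m s).trans_lt hs)
        (v.ne_zero_iff.2 (sub_ne_zero.2 hne))
    have hanti := antitone_valuation_criticalOrbit_add_sub (d := d) hc s
      (Nat.add_le_add_left h.1 m)
    have hcycle {k : ℕ} (hk : m ≤ k) : criticalOrbit d c (k + n) = criticalOrbit d c k :=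
      (h.criticalOrbit_add_eq_iff hk).2 dvd_rfl
    simp only [add_right_comm m n s, hcycle le_rfl, hcycle (Nat.le_add_right m s)] at hanti
    exact hstrict.not_ge hanti
  · refine valuation_criticalOrbit_lt_one_of_add_sub (k := m) hc hζ hζ1 ?_
    rw [heq, sub_self, v.map_zero]
    exact zero_lt_one

lemma valuation_criticalOrbit_add_sub_of_dvd (h : HasExactType d c (m + 1) n)
    (hζm : criticalOrbit d c (m + n) = ζ * criticalOrbit d c m) (hi : i ≠ 0) (hni : n ∣ i) :
    v (criticalOrbit d c (m + i) - criticalOrbit d c m) =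
      v (1 - ζ) * v (criticalOrbit d c m) := by
  have hle : n ≤ i := Nat.le_of_dvd (Nat.pos_of_ne_zero hi) hni
  have hcycle : criticalOrbit d c (m + i) = criticalOrbit d c (m + n) := by
    rw [← Nat.add_sub_cancel' hle, ← add_assoc]
    exact (h.criticalOrbit_add_eq_iff (Nat.add_le_add_left h.1 m)).2 (Nat.dvd_sub hni dvd_rfl)
  rw [hcycle, hζm, v.map_sub_swap, ← one_sub_mul, v.map_mul]

lemma valuation_criticalOrbit_eq_one (h : HasExactType d c (m + 1) n) (hd : 1 < d) (hc : v c ≤ 1)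
    (hζ1 : v (1 - ζ) = 1) (hζm : criticalOrbit d c (m + n) = ζ * criticalOrbit d c m)
    (hi : i ≠ 0) (hni : n ∣ i) : v (criticalOrbit d c i) = 1 := by
  have hm : m ≠ 0 := h.ne_zero_of_succ (by lia)
  have hne {j : ℕ} (hj : j ≠ 0) : v (criticalOrbit d c j) ≠ 0 :=
    h.valuation_criticalOrbit_ne_zero m.succ_ne_zero hj
  by_contra hi1
  replace hi1 := (valuation_criticalOrbit_le_one hc i).lt_of_ne hi1
  refine lt_irrefl (v (criticalOrbit d c i)) ?_
  calc v (criticalOrbit d c i) ≤ v (criticalOrbit d c m) :=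
        valuation_criticalOrbit_le hc hd (hne hi) hi1 (hne hm)
    _ = v (criticalOrbit d c (m + i) - criticalOrbit d c m) := by
        rw [h.valuation_criticalOrbit_add_sub_of_dvd hζm hi hni, hζ1, one_mul]
    _ ≤ v (criticalOrbit d c i) ^ d :=
        valuation_criticalOrbit_add_sub_le_pow hc (by lia) hm i
    _ < v (criticalOrbit d c i) := pow_lt_self_of_lt_one₀ (zero_lt_iff.2 (hne hi)) hi1 hd

lemma valuation_one_sub_mul_criticalOrbit_le (h : HasExactType d c (m + 1) n) (hd : 1 < d)
    (hc : v c ≤ 1) (hζm : criticalOrbit d c (m + n) = ζ * criticalOrbit d c m) (hi : i ≠ 0)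
    (hni : n ∣ i) (hi1 : v (criticalOrbit d c i) < 1) (hk : k ≤ m) :
    v (1 - ζ) * v (criticalOrbit d c i) ≤
      v (criticalOrbit d c (k + i) - criticalOrbit d c k) := by
  calc v (1 - ζ) * v (criticalOrbit d c i)
    _ ≤ v (1 - ζ) * v (criticalOrbit d c m) := by
      gcongr
      exact valuation_criticalOrbit_le hc hd (h.valuation_criticalOrbit_ne_zero m.succ_ne_zero hi)
        hi1 (h.valuation_criticalOrbit_ne_zero m.succ_ne_zero (h.ne_zero_of_succ (by lia)))
    _ = v (criticalOrbit d c (m + i) - criticalOrbit d c m) :=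
      (h.valuation_criticalOrbit_add_sub_of_dvd hζm hi hni).symm
    _ ≤ v (criticalOrbit d c (k + i) - criticalOrbit d c k) :=
      antitone_valuation_criticalOrbit_add_sub hc i hk

lemma valuation_one_sub_lt_criticalOrbit (h : HasExactType d c (m + 1) n) (hd : 1 < d)
    (hc : v c ≤ 1) (hζ : IsPrimitiveRoot ζ d) (hζ1 : v (1 - ζ) < 1)
    (hζm : criticalOrbit d c (m + n) = ζ * criticalOrbit d c m) (hi : i ≠ 0) (hni : n ∣ i)
    (hm : 1 < m) : v (1 - ζ) < v (criticalOrbit d c i) := by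
  have hvi := h.valuation_criticalOrbit_ne_zero (v := v) m.succ_ne_zero hi
  have hi1 := (h.valuation_criticalOrbit_lt_one_iff hd hc hζ hζ1).2 hni
  have hfirst := valuation_criticalOrbit_one_add_sub (v := v) (d := d) (c := c) (by lia) i
  have hsecond : v (criticalOrbit d c (1 + 1 + i) - criticalOrbit d c (1 + 1)) <
      v (criticalOrbit d c (1 + i) - criticalOrbit d c 1) := by
    rw [criticalOrbit_succ_add_sub_succ]
    refine valuation_pow_sub_pow_lt v hd hζ hζ1 (valuation_criticalOrbit_le_one hc 1)
      ((valuation_criticalOrbit_add_sub_le hc 1 i).trans_lt hi1) ?_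
    rw [hfirst]
    exact pow_ne_zero d hvi
  refine lt_of_mul_lt_mul_right' (a := v (criticalOrbit d c i)) ?_
  calc v (1 - ζ) * v (criticalOrbit d c i)
    _ ≤ v (criticalOrbit d c (1 + 1 + i) - criticalOrbit d c (1 + 1)) :=
      h.valuation_one_sub_mul_criticalOrbit_le hd hc hζm hi hni hi1 hm
    _ < v (criticalOrbit d c i) ^ d := hsecond.trans_eq hfirst
    _ ≤ v (criticalOrbit d c i) * v (criticalOrbit d c i) := by
      rw [← sq]
      exact pow_le_pow_right_of_le_one' hi1.le hd

-- If this failed at some `k > 0`, passing through `k + 1` would give `v(a_i) ≤ v(1 - ζ)`.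
lemma valuation_one_sub_mul_criticalOrbit_lt (h : HasExactType d c (m + 1) n) (hd : 1 < d)
    (hc : v c ≤ 1) (hζ : IsPrimitiveRoot ζ d) (hζ1 : v (1 - ζ) < 1)
    (hζm : criticalOrbit d c (m + n) = ζ * criticalOrbit d c m) (hi : i ≠ 0) (hni : n ∣ i)
    (hk : k < m) :
    v (1 - ζ) * v (criticalOrbit d c k) <
      v (criticalOrbit d c (k + i) - criticalOrbit d c k) := by
  have : NeZero d := ⟨by lia⟩
  have hζ0 : v (1 - ζ) ≠ 0 := v.ne_zero_iff.2 (sub_ne_zero.2 (hζ.ne_one hd).symm)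
  obtain rfl | hk0 := eq_or_ne k 0
  · simpa [zero_lt_iff] using h.criticalOrbit_ne_zero m.succ_ne_zero hi
  by_contra! hcon
  have hlt := h.valuation_one_sub_lt_criticalOrbit hd hc hζ hζ1 hζm hi hni (by lia)
  refine hlt.not_ge (le_of_mul_le_mul_left ?_ (zero_lt_iff.2 hζ0))
  calc v (1 - ζ) * v (criticalOrbit d c i)
    _ ≤ v (criticalOrbit d c (k + 1 + i) - criticalOrbit d c (k + 1)) :=
      h.valuation_one_sub_mul_criticalOrbit_le hd hc hζm hi hni
        ((h.valuation_criticalOrbit_lt_one_iff hd hc hζ hζ1).2 hni) hk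
    _ ≤ (v (1 - ζ) * v (criticalOrbit d c k)) ^ d := by
      rw [criticalOrbit_succ_add_sub_succ]
      exact valuation_pow_sub_pow_le_pow v hζ hcon
    _ ≤ v (1 - ζ) ^ d := by
      gcongr
      exact mul_le_of_le_one_right' (valuation_criticalOrbit_le_one hc k)
    _ ≤ v (1 - ζ) * v (1 - ζ) := by
      rw [← sq]
      exact pow_le_pow_right_of_le_one' hζ1.le hd

lemma valuation_criticalOrbit_add_sub_eq_pow (h : HasExactType d c (m + 1) n) (hd : 1 < d)
    (hc : v c ≤ 1) (hζ : IsPrimitiveRoot ζ d) (hζ1 : v (1 - ζ) < 1)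
    (hζm : criticalOrbit d c (m + n) = ζ * criticalOrbit d c m) (hi : i ≠ 0) (hni : n ∣ i)
    (hk : k ≤ m) :
    v (criticalOrbit d c (k + i) - criticalOrbit d c k) = v (criticalOrbit d c i) ^ d ^ k := by
  have : NeZero d := ⟨by lia⟩
  induction k with
  | zero => simp
  | succ k ih =>
    rw [criticalOrbit_succ_add_sub_succ, valuation_pow_sub_pow_eq v hζ
      (h.valuation_one_sub_mul_criticalOrbit_lt hd hc hζ hζ1 hζm hi hni hk), ih (by lia), ← pow_mul,
      ← pow_succ]

lemma valuation_one_sub_eq_criticalOrbit_pow (h : HasExactType d c (m + 1) n) (hd : 1 < d)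
    (hc : v c ≤ 1) (hζ : IsPrimitiveRoot ζ d)
    (hζm : criticalOrbit d c (m + n) = ζ * criticalOrbit d c m) (hi : i ≠ 0) (hni : n ∣ i) :
    v (1 - ζ) = v (criticalOrbit d c i) ^ (if n ∣ m then d ^ m - 1 else d ^ m) := by
  have : NeZero d := ⟨by lia⟩
  have hm : m ≠ 0 := h.ne_zero_of_succ (by lia)
  have hne {j : ℕ} (hj : j ≠ 0) : v (criticalOrbit d c j) ≠ 0 :=
    h.valuation_criticalOrbit_ne_zero m.succ_ne_zero hj
  have hζle : v (1 - ζ) ≤ 1 :=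
    v.map_sub_le v.map_one.le (valuation_eq_one_of_pow_eq_one v (NeZero.ne d) hζ.pow_eq_one).le
  obtain hζ1 | hζ1 := hζle.eq_or_lt
  · rw [h.valuation_criticalOrbit_eq_one hd hc hζ1 hζm hi hni, one_pow, hζ1]
  have hlt_iff {j : ℕ} : v (criticalOrbit d c j) < 1 ↔ n ∣ j :=
    h.valuation_criticalOrbit_lt_one_iff hd hc hζ hζ1
  have hmain : v (1 - ζ) * v (criticalOrbit d c m) = v (criticalOrbit d c i) ^ d ^ m := by
    rw [← h.valuation_criticalOrbit_add_sub_of_dvd hζm hi hni,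
      h.valuation_criticalOrbit_add_sub_eq_pow hd hc hζ hζ1 hζm hi hni le_rfl]
  split_ifs with hnm
  · have heq : v (criticalOrbit d c m) = v (criticalOrbit d c i) :=
      le_antisymm (valuation_criticalOrbit_le hc hd (hne hm) (hlt_iff.2 hnm) (hne hi))
        (valuation_criticalOrbit_le hc hd (hne hi) (hlt_iff.2 hni) (hne hm))
    rw [heq] at hmain
    refine mul_right_cancel₀ (hne hi) ?_
    rw [hmain, pow_sub_one_mul (pow_ne_zero m (NeZero.ne d))]
  · have heq : v (criticalOrbit d c m) = 1 :=
      (valuation_criticalOrbit_le_one hc m).eq_of_not_lt (mt hlt_iff.1 hnm)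
    rwa [heq, mul_one] at hmain

theorem valuation_criticalOrbit_pow (h : HasExactType d c (m + 1) n) (hd : d.Prime)
    (hc : v c ≤ 1) (hi : i ≠ 0) (hni : n ∣ i) :
    v (criticalOrbit d c i) ^ (if n ∣ m then (d ^ m - 1) * (d - 1) else d ^ m * (d - 1)) =
      v d := by
  obtain ⟨ζ, hζ, hζm⟩ := h.exists_isPrimitiveRoot hd
  rw [valuation_natCast_prime v hd hζ,
    h.valuation_one_sub_eq_criticalOrbit_pow hd.one_lt hc hζ hζm hi hni, ← pow_mul, ite_mul]

end HasExactType

section IntegrallyClosed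

variable {R : Type*} [CommRing R] [IsIntegrallyClosed R]

lemma dvd_of_forall_valuation_le (K : Type*) [Field K] [Algebra R K] [IsFractionRing R K] {x y : R}
    (h : ∀ V : ValuationSubring K, (∀ r : R, V.valuation (algebraMap R K r) ≤ 1) →
      V.valuation (algebraMap R K y) ≤ V.valuation (algebraMap R K x)) :
    x ∣ y := by
  obtain rfl | hx := eq_or_ne x 0
  · have hy := h ⊤ fun r ↦ (ValuationSubring.valuation_le_one_iff _ _).2 trivial
    rw [map_zero, map_zero, le_zero_iff, map_eq_zero, IsFractionRing.to_map_eq_zero_iff] at hy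
    rw [hy]
  have hx' : algebraMap R K x ≠ 0 := by rwa [Ne, IsFractionRing.to_map_eq_zero_iff]
  suffices hint : IsIntegral R (algebraMap R K y / algebraMap R K x) by
    obtain ⟨z, hz⟩ := IsIntegrallyClosed.isIntegral_iff.1 hint
    rw [eq_div_iff hx', ← map_mul] at hz
    exact ⟨z, by rw [mul_comm, IsFractionRing.injective R K hz]⟩
  by_contra hint
  obtain ⟨V, hV, hyx⟩ := Subring.exists_le_valuationSubring_of_isIntegrallyClosedIn
    (R := (integralClosure R K).toSubring) hint
  refine hyx ((V.valuation_le_one_iff _).1 ?_)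
  rw [map_div₀]
  exact div_le_one_of_le₀
    (h V fun r ↦ (V.valuation_le_one_iff _).2 (hV ((integralClosure R K).algebraMap_mem r))) zero_le

theorem orbit_ideal_pow_eq_span_prime_general [IsDomain R] {d m n i : ℕ} (hd : d.Prime)
    {c : R} (htype : HasExactType d c m n) (hm : m ≠ 0) (hi : i ≠ 0) (hni : n ∣ i) :
    Ideal.span {(fun x => x ^ d + c)^[i] 0} ^
        (if n ∣ m - 1 then (d ^ (m - 1) - 1) * (d - 1) else d ^ (m - 1) * (d - 1)) =
      Ideal.span {(d : R)} := by
  obtain ⟨m, rfl⟩ := Nat.exists_eq_succ_of_ne_zero hm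
  rw [← criticalOrbit, Ideal.span_singleton_pow, Ideal.span_singleton_eq_span_singleton,
    Nat.succ_sub_one]
  have hval (V : ValuationSubring (FractionRing R))
      (hV : ∀ r : R, V.valuation (algebraMap R (FractionRing R) r) ≤ 1) :=
    ((hasExactType_map_iff (IsFractionRing.injective R (FractionRing R))).2
      htype).valuation_criticalOrbit_pow hd (hV c) hi hni
  simp only [← map_criticalOrbit, ← map_natCast (algebraMap R (FractionRing R)), ← map_pow] at hval
  exact associated_of_dvd_dvd
    (dvd_of_forall_valuation_le (FractionRing R) fun V hV ↦ (hval V hV).ge)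
    (dvd_of_forall_valuation_le (FractionRing R) fun V hV ↦ (hval V hV).le)

end IntegrallyClosed

/-- Let `d` be a prime and `c ∈ O_K ⊂ ℚ̄` be such that `f_{c,d}` has exact
type `(m,n)` with `m ≠ 0`, `K = ℚ(c)`, `a_i = f_{c,d}^i(0) ∈ O_K`. If `n ∣ i`
(for `1 ≤ i ≤ m+n-1`), then `(a_i)^{M_{m,n}} = (d)` in `O_K`, where
`M_{m,n} = d^{m-1}(d-1)` if `n ∤ m-1` and `M_{m,n} = (d^{m-1}-1)(d-1)` if `n ∣ m-1`. -/
theorem orbit_ideal_pow_eq_span_prime (d m n : ℕ) (hd : d.Prime)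
    (K : Type*) [Field K] [NumberField K] (c : NumberField.RingOfIntegers K)
    (hgen : Algebra.adjoin ℚ {(c : K)} = ⊤)
    (htype : HasExactType d (c : K) m n) (hm : m ≠ 0)
    (i : ℕ) (hi1 : 1 ≤ i) (hi2 : i ≤ m + n - 1) (hni : n ∣ i) :
    Ideal.span {(fun x => x ^ d + c)^[i] 0} ^
        (if n ∣ m - 1 then (d ^ (m - 1) - 1) * (d - 1) else d ^ (m - 1) * (d - 1)) =
      Ideal.span {(d : NumberField.RingOfIntegers K)} :=
  orbit_ideal_pow_eq_span_prime_general hd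
    ((hasExactType_map_iff NumberField.RingOfIntegers.coe_injective).1 htype) hm (by lia) hni
end
end
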